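/- arXiv:2001.07281 — 9 statements merged into one kernel-verified Lean document; each statement's English description precedes it below -/
import Mathlib

section
/- Let M be the adjacency matrix of a directed (n,k,b,a,t)-Deza graph with witnessing (0,1)-matrices X and Y (so M·J = J·M = k·J, M² = a·X + b·Y + t·I and X + Y + I = J), and suppose a ≠ b. Then, viewing all matrices over the integers, (b−a)·(X·𝟙) = (b(n−1) − k² + t)·𝟙 and (a−b)·(Y·𝟙) = (a(n−1) − k² + t)·𝟙, where 𝟙 is the all-ones column vector; i.e., every row of X has the same sum α = (b(n−1)−k²+t)/(b−a) and every row of Y has the same sum β = (a(n−1)−k²+t)/(a−b), independent of the vertex. -/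
open Matrix Kronecker

/-- The all-ones square matrix over ℤ. -/
def allOnes (ι : Type*) : Matrix ι ι ℤ := Matrix.of fun _ _ => 1

/-- A (0,1)-matrix. -/
def IsZeroOne {ι κ : Type*} (M : Matrix ι κ ℤ) : Prop := ∀ i j, M i j = 0 ∨ M i j = 1

/-!
The all-ones vector `𝟙` is an eigenvector of `M` (eigenvalue `k`) and of `J` (eigenvalue `n`).
Applying `M² = a X + b Y + t I` and `X + Y + I = J` to `𝟙` gives a linear system for `X 𝟙` and
`Y 𝟙`; subtracting the first equation from `b` times the second eliminates `Y 𝟙`. The system is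
invariant under exchanging `(a, X)` with `(b, Y)`, so the same elimination computes `Y 𝟙`.
-/

theorem mulVec_one_eq_smul_one_of_mul_of_one {ι R : Type*} [Fintype ι] [NonAssocSemiring R]
    {k : R} {M : Matrix ι ι R}
    (h : M * of (fun _ _ : ι => (1 : R)) = k • of (fun _ _ : ι => (1 : R))) :
    M *ᵥ 1 = k • 1 :=
  funext fun i => congrFun₂ h i i

theorem of_one_mulVec_one {ι κ R : Type*} [Fintype ι] [NonAssocSemiring R] :
    of (fun (_ : κ) (_ : ι) => (1 : R)) *ᵥ 1 = (Fintype.card ι : R) • 1 := by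
  ext i
  simp [mulVec, dotProduct]

section

variable {ι R : Type*} [Fintype ι] [DecidableEq ι] [CommRing R]
  {a b k t : R} {M X Y : Matrix ι ι R}

theorem sub_smul_mulVec_eq_smul_of_mul_self_eq {m : R} {v : ι → R}
    (hMv : M *ᵥ v = k • v) (hM2 : M * M = a • X + b • Y + t • (1 : Matrix ι ι R))
    (hv : (X + Y + 1) *ᵥ v = m • v) :
    (b - a) • (X *ᵥ v) = (b * (m - 1) - k ^ 2 + t) • v := by
  have sq_eq : a • (X *ᵥ v) + b • (Y *ᵥ v) + t • v = k ^ 2 • v := calc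
    a • (X *ᵥ v) + b • (Y *ᵥ v) + t • v = (M * M) *ᵥ v := by
      simp only [hM2, add_mulVec, smul_mulVec, one_mulVec]
    _ = k ^ 2 • v := by rw [← mulVec_mulVec, hMv, mulVec_smul, hMv, smul_smul, sq]
  have sum_eq : X *ᵥ v + Y *ᵥ v + v = m • v := by
    simpa only [add_mulVec, one_mulVec] using hv
  linear_combination (norm := module) b • sum_eq - sq_eq

theorem deza_digraph_row_sums_general
    (hMJ : M * of (fun _ _ => 1) = k • of (fun _ _ => 1))
    (hM2 : M * M = a • X + b • Y + t • (1 : Matrix ι ι R))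
    (hXYI : X + Y + 1 = of (fun _ _ => 1)) :
    ((b - a) • (X *ᵥ fun _ => (1 : R)) =
      fun _ => b * ((Fintype.card ι : R) - 1) - k ^ 2 + t) ∧
    ((a - b) • (Y *ᵥ fun _ => (1 : R)) =
      fun _ => a * ((Fintype.card ι : R) - 1) - k ^ 2 + t) := by
  have smul_one_eq (c : R) : c • (1 : ι → R) = fun _ => c := funext fun _ => mul_one c
  have hM1 : M *ᵥ 1 = k • 1 := mulVec_one_eq_smul_one_of_mul_of_one hMJ
  have hXY1 : (X + Y + 1) *ᵥ 1 = (Fintype.card ι : R) • 1 := hXYI ▸ of_one_mulVec_one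
  have hYX1 : (Y + X + 1) *ᵥ 1 = (Fintype.card ι : R) • 1 := add_comm X Y ▸ hXY1
  have hM2_swap : M * M = b • Y + a • X + t • (1 : Matrix ι ι R) := add_comm (a • X) _ ▸ hM2
  constructor
  · exact (sub_smul_mulVec_eq_smul_of_mul_self_eq hM1 hM2 hXY1).trans (smul_one_eq _)
  · exact (sub_smul_mulVec_eq_smul_of_mul_self_eq hM1 hM2_swap hYX1).trans (smul_one_eq _)

end

/-- for a directed (n,k,b,a,t)-Deza graph with witnessing matrices X, Y and
a ≠ b, every row of X sums to α = (b(n−1)−k²+t)/(b−a) and every row of Y sums to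
β = (a(n−1)−k²+t)/(a−b). -/
theorem deza_digraph_row_sums (n : ℕ) (a b k t : ℤ)
    (h0a : 0 ≤ a) (hab : a ≤ b) (hbk : b ≤ k) (hkn : k ≤ (n : ℤ))
    (h0t : 0 ≤ t) (htk : t ≤ k)
    (M X Y : Matrix (Fin n) (Fin n) ℤ)
    (hM01 : IsZeroOne M) (hX01 : IsZeroOne X) (hY01 : IsZeroOne Y)
    (hdiag : ∀ i, M i i = 0)
    (hMJ : M * allOnes (Fin n) = k • allOnes (Fin n))
    (hJM : allOnes (Fin n) * M = k • allOnes (Fin n))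
    (hM2 : M * M = a • X + b • Y + t • (1 : Matrix (Fin n) (Fin n) ℤ))
    (hXYI : X + Y + 1 = allOnes (Fin n))
    (hne : a ≠ b) :
    ((b - a) • (X *ᵥ fun _ => (1 : ℤ)) = (fun _ => b * ((n : ℤ) - 1) - k ^ 2 + t)) ∧
    ((a - b) • (Y *ᵥ fun _ => (1 : ℤ)) = (fun _ => a * ((n : ℤ) - 1) - k ^ 2 + t)) := by
  simpa only [Fintype.card_fin] using deza_digraph_row_sums_general hMJ hM2 hXYI
end

section
/- Let M be the adjacency matrix of a directed (n,k,b,a,t)-Deza graph with witnessing (0,1)-matrices X and Y, and suppose a ≠ b. Then the integer b−a divides both b(n−1) − k² + t and a(n−1) − k² + t. Moreover, if a < b and both X ≠ 0 and Y ≠ 0, then a(n−1) < k² − t < b(n−1). -/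
open Matrix Kronecker

/-!
Since `Y = J - 1 - X`, the equation for `M²` reads `(b - a) X = b J + (t - b) 1 - M²`. Comparing
row sums, each row sum of `X` times `b - a` equals `b (n - 1) - k² + t`. Exchanging the pairs
`(X, a)` and `(Y, b)` gives the corresponding formula for `Y`. Any row yields the divisibilities,
and a nonzero row of `X`, respectively `Y`, yields a strict inequality.
-/

theorem IsZeroOne.nonneg {ι κ : Type*} {M : Matrix ι κ ℤ} (hM : IsZeroOne M) (i : ι) (j : κ) :
    0 ≤ M i j := by
  rcases hM i j with h | h <;> simp [h]

section RowSums

variable {ι κ R : Type*} [Fintype κ]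

theorem exists_sum_row_pos [AddCommMonoid R] [PartialOrder R] [IsOrderedCancelAddMonoid R]
    {Z : Matrix ι κ R} (hZ : ∀ i j, 0 ≤ Z i j) (hZ0 : Z ≠ 0) : ∃ i, 0 < ∑ j, Z i j := by
  obtain ⟨i, hi⟩ : ∃ i, Z i ≠ 0 := Function.ne_iff.mp hZ0
  have hrow : 0 < Z i := lt_of_le_of_ne (hZ i) hi.symm
  exact ⟨i, Fintype.sum_pos hrow⟩

theorem sum_row_eq_of_mul_ones {μ : Type*} [Nonempty μ] [NonAssocSemiring R] {M : Matrix ι κ R}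
    {k : R} (hM : M * (Matrix.of 1 : Matrix κ μ R) = k • Matrix.of 1) (i : ι) :
    ∑ j, M i j = k := by
  obtain ⟨m⟩ := ‹Nonempty μ›
  simpa [Matrix.mul_apply] using congrFun₂ hM i m

theorem sum_row_mul {μ : Type*} [Fintype μ] [NonUnitalNonAssocSemiring R] {M : Matrix ι κ R}
    {N : Matrix κ μ R} {k l : R} (hM : ∀ i, ∑ j, M i j = k) (hN : ∀ j, ∑ m, N j m = l) (i : ι) :
    ∑ m, (M * N) i m = k * l := by
  calc ∑ m, (M * N) i m = ∑ j, M i j * ∑ m, N j m := by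
        simp only [Matrix.mul_apply, Finset.mul_sum]
        exact Finset.sum_comm
    _ = k * l := by simp only [hN, ← Finset.sum_mul, hM]

end RowSums

section Deza

variable {ι R : Type*} [Fintype ι] [DecidableEq ι] {a b k t : R} {M X Y : Matrix ι ι R}

section CommRing

variable [CommRing R]

theorem sub_mul_sum_row_left (hM : ∀ i, ∑ j, M i j = k) (hM2 : M * M = a • X + b • Y + t • 1)
    (hXY : X + Y + 1 = Matrix.of 1) (i : ι) :
    (b - a) * ∑ j, X i j = b * ((Fintype.card ι : R) - 1) - k ^ 2 + t := by
  have hX : (b - a) • X = b • Matrix.of 1 + (t - b) • 1 - M * M := by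
    rw [hM2, ← hXY]
    module
  calc (b - a) * ∑ j, X i j = ∑ j, ((b - a) • X) i j := by simp [Finset.mul_sum]
    _ = b * Fintype.card ι + (t - b) - k ^ 2 := by
        rw [hX]
        simp [Finset.sum_add_distrib, Matrix.one_apply, sum_row_mul hM hM, sq, mul_comm]
    _ = b * ((Fintype.card ι : R) - 1) - k ^ 2 + t := by ring

theorem sub_mul_sum_row_right (hM : ∀ i, ∑ j, M i j = k) (hM2 : M * M = a • X + b • Y + t • 1)
    (hXY : X + Y + 1 = Matrix.of 1) (i : ι) :
    (b - a) * ∑ j, Y i j = k ^ 2 - t - a * ((Fintype.card ι : R) - 1) := by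
  rw [add_comm (a • X)] at hM2
  rw [add_comm X] at hXY
  linear_combination -sub_mul_sum_row_left hM hM2 hXY i

end CommRing

theorem deza_digraph_divisibility_general [CommRing R] [PartialOrder R] [IsStrictOrderedRing R]
    [Nonempty ι] (hX : ∀ i j, 0 ≤ X i j) (hY : ∀ i j, 0 ≤ Y i j)
    (hMJ : M * Matrix.of 1 = k • Matrix.of 1) (hM2 : M * M = a • X + b • Y + t • 1)
    (hXY : X + Y + 1 = Matrix.of 1) :
    (b - a ∣ b * ((Fintype.card ι : R) - 1) - k ^ 2 + t) ∧
    (b - a ∣ a * ((Fintype.card ι : R) - 1) - k ^ 2 + t) ∧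
    (a < b → X ≠ 0 → Y ≠ 0 →
      a * ((Fintype.card ι : R) - 1) < k ^ 2 - t ∧
      k ^ 2 - t < b * ((Fintype.card ι : R) - 1)) := by
  have hM := sum_row_eq_of_mul_ones hMJ
  have rowX := sub_mul_sum_row_left hM hM2 hXY
  have rowY := sub_mul_sum_row_right hM hM2 hXY
  obtain ⟨i⟩ := ‹Nonempty ι›
  refine ⟨⟨∑ j, X i j, (rowX i).symm⟩, ⟨-∑ j, Y i j, by linear_combination rowY i⟩,
    fun hab hX0 hY0 => ⟨?_, ?_⟩⟩
  · obtain ⟨l, hl⟩ := exists_sum_row_pos hY hY0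
    exact sub_pos.mp (rowY l ▸ mul_pos (sub_pos.mpr hab) hl)
  · obtain ⟨l, hl⟩ := exists_sum_row_pos hX hX0
    have hpos := mul_pos (sub_pos.mpr hab) hl
    rwa [rowX l, sub_add, sub_pos] at hpos

end Deza

/-- divisibility conditions for the parameters of a directed
(n,k,b,a,t)-Deza graph with a ≠ b, and the inequality a(n−1) < k²−t < b(n−1) when a < b
and both X and Y are nonzero. -/
theorem deza_digraph_divisibility (n : ℕ) (a b k t : ℤ)
    (h0a : 0 ≤ a) (hab : a ≤ b) (hbk : b ≤ k) (hkn : k ≤ (n : ℤ))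
    (h0t : 0 ≤ t) (htk : t ≤ k)
    (M X Y : Matrix (Fin n) (Fin n) ℤ)
    (hM01 : IsZeroOne M) (hX01 : IsZeroOne X) (hY01 : IsZeroOne Y)
    (hdiag : ∀ i, M i i = 0)
    (hMJ : M * allOnes (Fin n) = k • allOnes (Fin n))
    (hJM : allOnes (Fin n) * M = k • allOnes (Fin n))
    (hM2 : M * M = a • X + b • Y + t • (1 : Matrix (Fin n) (Fin n) ℤ))
    (hXYI : X + Y + 1 = allOnes (Fin n))
    (hne : a ≠ b) :
    ((b - a) ∣ (b * ((n : ℤ) - 1) - k ^ 2 + t)) ∧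
    ((b - a) ∣ (a * ((n : ℤ) - 1) - k ^ 2 + t)) ∧
    (a < b → X ≠ 0 → Y ≠ 0 →
      a * ((n : ℤ) - 1) < k ^ 2 - t ∧ k ^ 2 - t < b * ((n : ℤ) - 1)) := by
  have : NeZero n := ⟨by omega⟩
  simpa only [Fintype.card_fin] using
    deza_digraph_divisibility_general hX01.nonneg hY01.nonneg hMJ hM2 hXYI
end

section
/- Let M₁ be the adjacency matrix of a directed strongly regular graph with parameters (n,k,λ,λ,t) (i.e., with λ = μ), and let n' ≥ 1. Then M₁ ⊗ J_{n'} is the adjacency matrix of a directed Deza graph with parameters (nn', kn', tn', λn', tn'); that is, M := M₁ ⊗ J_{n'} is an nn'×nn' (0,1)-matrix with zero diagonal satisfying M·J = J·M = kn'·J and M² = λn'·X + tn'·Y + tn'·I for some (0,1)-matrices X, Y with X + Y + I = J. -/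
open Matrix Kronecker

/-!
Since `λ = μ`, the DSRG equation collapses to `M₁² = t I + λ (J - I)`. As `J² = n' J`, squaring
`M₁ ⊗ J` gives `n' (t I ⊗ J + λ (J - I) ⊗ J)`, and `I ⊗ J` splits into `I` and `I ⊗ (J - I)`.
So the required matrices are `X = (J - I) ⊗ J` and `Y = I ⊗ (J - I)`.
-/

section ZeroOneMatrices

variable {ι κ ι' κ' : Type*}

theorem isZeroOne_allOnes : IsZeroOne (allOnes ι) := fun _ _ => Or.inr rfl

theorem isZeroOne_one [DecidableEq ι] : IsZeroOne (1 : Matrix ι ι ℤ) := by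
  intro i j
  rcases eq_or_ne i j with rfl | h
  · exact Or.inr (one_apply_eq i)
  · exact Or.inl (one_apply_ne h)

theorem IsZeroOne.allOnes_sub {A : Matrix ι ι ℤ} (hA : IsZeroOne A) :
    IsZeroOne (allOnes ι - A) := by
  intro i j
  rcases hA i j with h | h <;> simp [allOnes, h]

theorem IsZeroOne.kronecker {A : Matrix ι κ ℤ} {B : Matrix ι' κ' ℤ} (hA : IsZeroOne A)
    (hB : IsZeroOne B) : IsZeroOne (A ⊗ₖ B) := by
  intro i j
  rcases hA i.1 j.1 with h | h <;> simp [h, hB i.2 j.2]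

end ZeroOneMatrices

section AllOnes

variable {ι κ : Type*}

theorem allOnes_prod : allOnes (ι × κ) = allOnes ι ⊗ₖ allOnes κ := by
  ext
  simp [allOnes]

theorem allOnes_mul_allOnes [Fintype ι] :
    allOnes ι * allOnes ι = (Fintype.card ι : ℤ) • allOnes ι := by
  ext
  simp [allOnes, mul_apply]

theorem kronecker_allOnes_mul_kronecker_allOnes [Fintype ι] [Fintype κ] (A B : Matrix ι ι ℤ) :
    (A ⊗ₖ allOnes κ) * (B ⊗ₖ allOnes κ) = (Fintype.card κ : ℤ) • ((A * B) ⊗ₖ allOnes κ) := by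
  rw [← mul_kronecker_mul, allOnes_mul_allOnes, kronecker_smul]

theorem one_kronecker_allOnes [DecidableEq ι] [DecidableEq κ] :
    (1 : Matrix ι ι ℤ) ⊗ₖ allOnes κ = 1 ⊗ₖ (allOnes κ - 1) + 1 := by
  rw [← one_kronecker_one, ← kronecker_add, sub_add_cancel]

theorem allOnes_sub_one_kronecker_add [DecidableEq ι] [DecidableEq κ] :
    (allOnes ι - 1) ⊗ₖ allOnes κ + 1 ⊗ₖ (allOnes κ - 1) + 1 = allOnes (ι × κ) := by
  rw [add_assoc, ← one_kronecker_allOnes, ← add_kronecker, sub_add_cancel, allOnes_prod]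

end AllOnes

section Digraphs

variable {ι : Type*} [Fintype ι]

/-- `M` is the adjacency matrix of a loopless digraph on the vertex set `ι` in which every vertex
has in-degree and out-degree `k`. Integer parameters are used, as the matrices are integral. -/
structure IsRegularDigraph (M : Matrix ι ι ℤ) (k : ℤ) : Prop where
  isZeroOne : IsZeroOne M
  diag_eq_zero : ∀ i, M i i = 0
  mul_allOnes : M * allOnes ι = k • allOnes ι
  allOnes_mul : allOnes ι * M = k • allOnes ι

/-- `M` is the adjacency matrix of a directed strongly regular graph with parameters
`(n, k, l, m, t)`, where `n` is the cardinality of `ι` and `l`, `m` stand for `λ`, `μ`. -/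
structure IsDirectedStronglyRegular [DecidableEq ι] (M : Matrix ι ι ℤ) (k l m t : ℤ) : Prop
    extends IsRegularDigraph M k where
  mul_self : M * M = t • (1 : Matrix ι ι ℤ) + l • M + m • (allOnes ι - 1 - M)

/-- `M` is the adjacency matrix of a directed `(n, k, b, a, t)`-Deza graph, where `n` is the
cardinality of `ι`: two distinct vertices are joined by `a` or by `b` directed paths of length
two, according to whether `X` or `Y` has the entry one. -/
structure IsDirectedDeza [DecidableEq ι] (M : Matrix ι ι ℤ) (k b a t : ℤ) : Prop
    extends IsRegularDigraph M k where
  exists_mul_self : ∃ X Y : Matrix ι ι ℤ, IsZeroOne X ∧ IsZeroOne Y ∧ X + Y + 1 = allOnes ι ∧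
    M * M = a • X + b • Y + t • (1 : Matrix ι ι ℤ)

variable {κ : Type*} [Fintype κ] {M : Matrix ι ι ℤ} {k l t : ℤ}

theorem IsRegularDigraph.kronecker_allOnes (h : IsRegularDigraph M k) :
    IsRegularDigraph (M ⊗ₖ allOnes κ) (k * Fintype.card κ) where
  isZeroOne := h.isZeroOne.kronecker isZeroOne_allOnes
  diag_eq_zero i := by simp [h.diag_eq_zero]
  mul_allOnes := by
    rw [allOnes_prod, kronecker_allOnes_mul_kronecker_allOnes, h.mul_allOnes, smul_kronecker,
      smul_smul, mul_comm]
  allOnes_mul := by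
    rw [allOnes_prod, kronecker_allOnes_mul_kronecker_allOnes, h.allOnes_mul, smul_kronecker,
      smul_smul, mul_comm]

variable [DecidableEq ι] [DecidableEq κ]

theorem IsDirectedStronglyRegular.mul_self_eq_smul_one_add
    (h : IsDirectedStronglyRegular M k l l t) :
    M * M = t • (1 : Matrix ι ι ℤ) + l • (allOnes ι - 1) := by
  rw [h.mul_self, add_assoc, ← smul_add, add_sub_cancel]

theorem IsDirectedStronglyRegular.kronecker_allOnes_mul_self
    (h : IsDirectedStronglyRegular M k l l t) :
    (M ⊗ₖ allOnes κ) * (M ⊗ₖ allOnes κ) =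
      (l * Fintype.card κ) • ((allOnes ι - 1) ⊗ₖ allOnes κ) +
        (t * Fintype.card κ) • (1 ⊗ₖ (allOnes κ - 1)) +
        (t * Fintype.card κ) • (1 : Matrix (ι × κ) (ι × κ) ℤ) :=
  calc (M ⊗ₖ allOnes κ) * (M ⊗ₖ allOnes κ)
    _ = (Fintype.card κ : ℤ) •
          ((t • (1 : Matrix ι ι ℤ) + l • (allOnes ι - 1)) ⊗ₖ allOnes κ) := by
      rw [kronecker_allOnes_mul_kronecker_allOnes, h.mul_self_eq_smul_one_add]
    _ = (l * Fintype.card κ) • ((allOnes ι - 1) ⊗ₖ allOnes κ) +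
          (t * Fintype.card κ) • ((1 : Matrix ι ι ℤ) ⊗ₖ allOnes κ) := by
      rw [add_kronecker, smul_kronecker, smul_kronecker]
      module
    _ = _ := by
      rw [one_kronecker_allOnes, smul_add, ← add_assoc]

theorem deza_digraph_dsrg_blow_up_general (h : IsDirectedStronglyRegular M k l l t) :
    IsDirectedDeza (M ⊗ₖ allOnes κ) (k * Fintype.card κ) (t * Fintype.card κ)
      (l * Fintype.card κ) (t * Fintype.card κ) where
  toIsRegularDigraph := h.toIsRegularDigraph.kronecker_allOnes
  exists_mul_self :=
    ⟨(allOnes ι - 1) ⊗ₖ allOnes κ, 1 ⊗ₖ (allOnes κ - 1),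
      isZeroOne_one.allOnes_sub.kronecker isZeroOne_allOnes,
      isZeroOne_one.kronecker isZeroOne_one.allOnes_sub,
      allOnes_sub_one_kronecker_add, h.kronecker_allOnes_mul_self⟩

end Digraphs

/-- if M₁ is the adjacency matrix of a DSRG with parameters (n,k,λ,λ,t)
and n' ≥ 1, then M₁ ⊗ J_{n'} is the adjacency matrix of a directed Deza graph with
parameters (nn', kn', tn', λn', tn'). -/
theorem deza_digraph_dsrg_blow_up (n n' : ℕ) (k l t : ℤ) (hn' : 1 ≤ n')
    (M₁ : Matrix (Fin n) (Fin n) ℤ)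
    (hM₁01 : IsZeroOne M₁) (hM₁diag : ∀ i, M₁ i i = 0)
    (hM₁J : M₁ * allOnes (Fin n) = k • allOnes (Fin n))
    (hJM₁ : allOnes (Fin n) * M₁ = k • allOnes (Fin n))
    (hM₁2 : M₁ * M₁ = t • (1 : Matrix (Fin n) (Fin n) ℤ) + l • M₁ +
      l • (allOnes (Fin n) - 1 - M₁))
    (M : Matrix (Fin n × Fin n') (Fin n × Fin n') ℤ)
    (hM : M = M₁ ⊗ₖ allOnes (Fin n')) :
    IsZeroOne M ∧ (∀ i, M i i = 0) ∧
    M * allOnes (Fin n × Fin n') = (k * (n' : ℤ)) • allOnes (Fin n × Fin n') ∧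
    allOnes (Fin n × Fin n') * M = (k * (n' : ℤ)) • allOnes (Fin n × Fin n') ∧
    ∃ X Y : Matrix (Fin n × Fin n') (Fin n × Fin n') ℤ,
      IsZeroOne X ∧ IsZeroOne Y ∧ X + Y + 1 = allOnes (Fin n × Fin n') ∧
      M * M = (l * (n' : ℤ)) • X + (t * (n' : ℤ)) • Y +
        (t * (n' : ℤ)) • (1 : Matrix (Fin n × Fin n') (Fin n × Fin n') ℤ) := by
  have h := deza_digraph_dsrg_blow_up_general (κ := Fin n')
    ⟨⟨hM₁01, hM₁diag, hM₁J, hJM₁⟩, hM₁2⟩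
  rw [Fintype.card_fin, ← hM] at h
  exact ⟨h.isZeroOne, h.diag_eq_zero, h.mul_allOnes, h.allOnes_mul, h.exists_mul_self⟩
end

section
/- Let t ≥ 0 and let A be a (4t+3)×(4t+3) (0,1)-matrix with zero diagonal satisfying A + Aᵀ = J − I (a tournament) and A² = (t+1)·(J − I) − A (a doubly regular tournament). Then A·J = J·A = (2t+1)·J, and A is the adjacency matrix of a directed (4t+3, 2t+1, t+1, t, 0)-Deza graph; explicitly, A² = t·A + (t+1)·(J − I − A) + 0·I, where X = A and Y = J − I − A are (0,1)-matrices with X + Y + I = J. -/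
open Matrix Kronecker

/-!
Up to the factor `t + 1`, the equation for `A²` writes `J` as a polynomial in `A`, so `A` commutes
with `J`; that is, every row sum of `A` equals every column sum. The tournament equation makes the
sums of row `i` and column `i` add up to `4t + 2`, so all of them are `2t + 1`. It also identifies
`J - I - A` with `Aᵀ`, and the Deza equation is then the equation for `A²` with terms regrouped.
-/

theorem commute_of_mul_self_eq_smul_sub_one_sub {S R : Type*} [CommSemiring S] [Ring R]
    [Algebra S R] {a b : R} {c : S} (hc : IsSMulRegular R c)
    (h : a * a = c • (b - 1) - a) : Commute a b := by
  have hcb : c • b = a * a + a + c • 1 := by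
    rw [h, sub_add_cancel, ← smul_add, sub_add_cancel]
  have hcomm : Commute a (c • b) := by
    rw [hcb]
    exact (((Commute.refl a).mul_right (Commute.refl a)).add_right (Commute.refl a)).add_right
      ((Commute.one_right a).smul_right c)
  apply hc
  simpa only [mul_smul_comm, smul_mul_assoc] using hcomm.eq

theorem IsZeroOne.transpose {ι κ : Type*} {M : Matrix ι κ ℤ} (hM : IsZeroOne M) : IsZeroOne Mᵀ :=
  fun i j => hM j i

section Sums

variable {ι : Type*} [Fintype ι] {A : Matrix ι ι ℤ}

theorem mul_allOnes_apply (A : Matrix ι ι ℤ) (i j : ι) : (A * allOnes ι) i j = ∑ k, A i k := by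
  simp [Matrix.mul_apply, allOnes]

theorem allOnes_mul_apply (A : Matrix ι ι ℤ) (i j : ι) : (allOnes ι * A) i j = ∑ k, A k j := by
  simp [Matrix.mul_apply, allOnes]

theorem sum_row_eq_sum_col_of_commute_allOnes (h : Commute A (allOnes ι)) (i j : ι) :
    ∑ k, A i k = ∑ k, A k j := by
  rw [← mul_allOnes_apply A i j, h.eq, allOnes_mul_apply]

variable [DecidableEq ι]

theorem sum_row_add_sum_col_of_add_transpose_eq (h : A + Aᵀ = allOnes ι - 1) (i : ι) :
    ∑ k, A i k + ∑ k, A k i = Fintype.card ι - 1 := by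
  calc ∑ k, A i k + ∑ k, A k i = ∑ k, (A + Aᵀ) i k := by
        simp only [Matrix.add_apply, transpose_apply, Finset.sum_add_distrib]
    _ = ∑ k, (1 - (1 : Matrix ι ι ℤ) i k) := by rw [h]; rfl
    _ = Fintype.card ι - 1 := by simp [Finset.sum_sub_distrib, Matrix.one_apply]

theorem mul_allOnes_of_commute_of_add_transpose_eq {m : ℤ}
    (hcard : (Fintype.card ι : ℤ) = 2 * m + 1) (hcomm : Commute A (allOnes ι))
    (htour : A + Aᵀ = allOnes ι - 1) : A * allOnes ι = m • allOnes ι := by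
  ext i j
  have hrow : ∑ k, A i k = m := by
    linarith [sum_row_eq_sum_col_of_commute_allOnes hcomm i i,
      sum_row_add_sum_col_of_add_transpose_eq htour i]
  simpa [allOnes] using (mul_allOnes_apply A i j).trans hrow

end Sums

/-- a doubly regular tournament on 4t+3 vertices is a directed
(4t+3, 2t+1, t+1, t, 0)-Deza graph. -/
theorem doubly_regular_tournament_is_deza (t : ℕ)
    (A : Matrix (Fin (4 * t + 3)) (Fin (4 * t + 3)) ℤ)
    (hA01 : IsZeroOne A) (hdiag : ∀ i, A i i = 0)
    (htour : A + Aᵀ = allOnes (Fin (4 * t + 3)) - 1)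
    (hA2 : A * A = ((t : ℤ) + 1) • (allOnes (Fin (4 * t + 3)) - 1) - A) :
    A * allOnes (Fin (4 * t + 3)) = (2 * (t : ℤ) + 1) • allOnes (Fin (4 * t + 3)) ∧
    allOnes (Fin (4 * t + 3)) * A = (2 * (t : ℤ) + 1) • allOnes (Fin (4 * t + 3)) ∧
    IsZeroOne A ∧ IsZeroOne (allOnes (Fin (4 * t + 3)) - 1 - A) ∧
    A + (allOnes (Fin (4 * t + 3)) - 1 - A) + 1 = allOnes (Fin (4 * t + 3)) ∧
    A * A = (t : ℤ) • A + ((t : ℤ) + 1) • (allOnes (Fin (4 * t + 3)) - 1 - A) +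
      (0 : ℤ) • (1 : Matrix (Fin (4 * t + 3)) (Fin (4 * t + 3)) ℤ) := by
  have hcomm : Commute A (allOnes (Fin (4 * t + 3))) :=
    commute_of_mul_self_eq_smul_sub_one_sub (.of_ne_zero (by positivity)) hA2
  have hrow : A * allOnes (Fin (4 * t + 3)) = (2 * (t : ℤ) + 1) • allOnes (Fin (4 * t + 3)) :=
    mul_allOnes_of_commute_of_add_transpose_eq (by push_cast [Fintype.card_fin]; ring) hcomm htour
  have htranspose : allOnes (Fin (4 * t + 3)) - 1 - A = Aᵀ :=
    sub_eq_of_eq_add' htour.symm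
  refine ⟨hrow, hcomm.eq ▸ hrow, hA01, htranspose ▸ hA01.transpose, by abel, ?_⟩
  rw [hA2]
  module
end

section
/- Let n be even and suppose there exists a Hadamard matrix of order n (an n×n (±1)-matrix H with H·Hᵀ = n·I). Then there exists a twin Deza graph with parameters ((2n−1)n, (n−1)n, n(n−1)/2, n(n−2)/2): there exist (2n−1)n×(2n−1)n (0,1)-matrices A and B with A + B = (J_{2n−1} − I_{2n−1}) ⊗ J_n (in particular A and B are disjoint) such that each of A and B is the adjacency matrix of a Deza graph with parameters ((2n−1)n, (n−1)n, n(n−1)/2, n(n−2)/2). -/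
open Matrix Kronecker

/-- `M` is the adjacency matrix of a Deza graph with parameters (|ι|, k, b, a):
a symmetric (0,1)-matrix with zero diagonal, row sums k, and
M² = a·X + b·Y + k·I for some (0,1)-matrices X, Y with X + Y + I = J. -/
def IsDezaAdj {ι : Type*} [Fintype ι] [DecidableEq ι]
    (M : Matrix ι ι ℤ) (k b a : ℤ) : Prop :=
  IsZeroOne M ∧ Mᵀ = M ∧ (∀ i, M i i = 0) ∧
  M * allOnes ι = k • allOnes ι ∧
  ∃ X Y : Matrix ι ι ℤ, IsZeroOne X ∧ IsZeroOne Y ∧ X + Y + 1 = allOnes ι ∧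
    M * M = a • X + b • Y + k • (1 : Matrix ι ι ℤ)

/-!
Normalise the Hadamard matrix so that row `z` is all ones, and let `rₑ` be the other rows. The
rank-one matrices `Cₑ = rₑᵀ rₑ` have zero row sums and satisfy `Cₑ C_f = 0` for `e ≠ f`,
`Cₑ² = n Cₑ` and `∑ Cₑ = n I - J`. Colour the edges of the complete graph on `2n - 1` vertices with
the labels `e` so that every vertex meets every colour twice and any two vertices are joined by
exactly one monochromatic path of length two (for the cyclic group, colour `{i, j}` by `±(i - j)`).
Substituting `Cₑ` for each edge of colour `e` gives a signing `T` of the complete multipartite graph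
`P = (J - I) ⊗ J`. The matrices `A`, `B` of its positive and negative entries satisfy `2A = P + T`,
`2B = P - T`, and since `P T = T P = 0` both squares equal `(P² + T²) / 4`, which can be read off
from the properties of the colouring and of the `Cₑ`.
-/

section DezaCriterion

variable {ι : Type*} [Fintype ι]

lemma IsZeroOne.mul_self_apply_self {M : Matrix ι ι ℤ} (hM : IsZeroOne M) (hsymm : Mᵀ = M)
    (i : ι) : (M * M) i i = ∑ j, M i j := by
  rw [mul_apply]
  refine Finset.sum_congr rfl fun j _ => ?_
  have hji : M j i = M i j := congrFun₂ hsymm i j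
  rcases hM i j with h | h <;> simp [hji, h]

variable [DecidableEq ι]

theorem IsDezaAdj.of_mul_self_apply {M : Matrix ι ι ℤ} {k b a : ℤ} (hM : IsZeroOne M)
    (hsymm : Mᵀ = M) (hdiag : ∀ i, M i i = 0) (hrow : ∀ i, ∑ j, M i j = k)
    (hsq : ∀ i j, i ≠ j → (M * M) i j = a ∨ (M * M) i j = b) : IsDezaAdj M k b a := by
  let Y : Matrix ι ι ℤ := of fun i j => if i ≠ j ∧ (M * M) i j = b then 1 else 0
  refine ⟨hM, hsymm, hdiag, ?_, allOnes ι - 1 - Y, Y, ?_, ?_, by abel, ?_⟩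
  · ext i j
    simp [mul_apply, allOnes, hrow]
  · intro i j
    by_cases hij : i = j <;> by_cases hb : (M * M) i j = b <;> simp [Y, allOnes, hij, hb]
  · intro i j
    by_cases h : i ≠ j ∧ (M * M) i j = b <;> simp [Y, h]
  · ext i j
    simp only [Matrix.add_apply, Matrix.smul_apply, Matrix.sub_apply]
    by_cases hij : i = j
    · subst hij
      simp [Y, allOnes, hM.mul_self_apply_self hsymm, hrow]
    · by_cases hb : (M * M) i j = b
      · simp [Y, allOnes, hij, hb]
      · have ha := (hsq i j hij).resolve_right hb
        rw [ha] at hb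
        simp [Y, allOnes, hij, ha, hb]

lemma IsDezaAdj.of_isEmpty [IsEmpty ι] (M : Matrix ι ι ℤ) (k b a : ℤ) : IsDezaAdj M k b a :=
  .of_mul_self_apply isEmptyElim (Subsingleton.elim _ _) isEmptyElim isEmptyElim isEmptyElim

end DezaCriterion

section Signing

lemma allOnes_mul_self (ι : Type*) [Fintype ι] :
    allOnes ι * allOnes ι = (Fintype.card ι : ℤ) • allOnes ι := by
  ext i j
  simp [allOnes, mul_apply]

variable {ι α : Type*} [DecidableEq ι]

/-- The adjacency matrix `(J - I) ⊗ J` of the complete multipartite graph with parts `{i} × α`. -/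
def multipartiteAdj (ι α : Type*) [DecidableEq ι] : Matrix (ι × α) (ι × α) ℤ :=
  (allOnes ι - 1) ⊗ₖ allOnes α

lemma multipartiteAdj_apply (u v : ι × α) :
    multipartiteAdj ι α u v = if u.1 = v.1 then 0 else 1 := by
  by_cases h : u.1 = v.1 <;> simp [multipartiteAdj, allOnes, h]

lemma multipartiteAdj_transpose : (multipartiteAdj ι α)ᵀ = multipartiteAdj ι α := by
  ext u v
  simp only [transpose_apply, multipartiteAdj_apply, eq_comm]

section

variable [Fintype ι] [Fintype α]

lemma sum_multipartiteAdj (u : ι × α) :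
    ∑ v, multipartiteAdj ι α u v = (Fintype.card ι - 1) * Fintype.card α :=
  calc ∑ v, multipartiteAdj ι α u v
    _ = (∑ j, (allOnes ι - 1) u.1 j) * ∑ y, allOnes α u.2 y := by
      rw [Fintype.sum_prod_type, Finset.sum_mul_sum]
      rfl
    _ = (Fintype.card ι - 1) * Fintype.card α := by simp [allOnes, one_apply]

lemma multipartiteAdj_mul_self_apply (u v : ι × α) :
    (multipartiteAdj ι α * multipartiteAdj ι α) u v =
      (Fintype.card ι - 2 + if u.1 = v.1 then 1 else 0) * Fintype.card α := by
  have hsq : (allOnes ι - 1) * (allOnes ι - 1) = ((Fintype.card ι : ℤ) - 2) • allOnes ι + 1 := by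
    rw [sub_mul, mul_sub, allOnes_mul_self, one_mul, mul_one]
    module
  rw [multipartiteAdj, ← mul_kronecker_mul, hsq, allOnes_mul_self]
  simp [allOnes, one_apply]

end

/-- A signing of the edges of the complete multipartite graph `(J - I) ⊗ J` in which every vertex
sees equally many signs `1` and `-1` in each part. -/
structure IsBalancedSigning [Fintype α] (T : Matrix (ι × α) (ι × α) ℤ) : Prop where
  transpose_eq : Tᵀ = T
  abs_apply : ∀ u v, |T u v| = multipartiteAdj ι α u v
  sum_part : ∀ u j, ∑ y, T u (j, y) = 0

namespace IsBalancedSigning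

variable [Fintype α] {T : Matrix (ι × α) (ι × α) ℤ}

lemma neg (hT : IsBalancedSigning T) : IsBalancedSigning (-T) where
  transpose_eq := by rw [transpose_neg, hT.transpose_eq]
  abs_apply u v := by rw [Matrix.neg_apply, abs_neg, hT.abs_apply]
  sum_part u j := by simp only [Matrix.neg_apply, Finset.sum_neg_distrib, hT.sum_part, neg_zero]

lemma posPart_add_posPart_neg (hT : IsBalancedSigning T) :
    T.map (·⁺) + (-T).map (·⁺) = multipartiteAdj ι α := by
  ext u v
  simp only [Matrix.add_apply, map_apply, Matrix.neg_apply, posPart_neg, posPart_add_negPart,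
    hT.abs_apply]

lemma two_smul_posPart (hT : IsBalancedSigning T) :
    2 • T.map (·⁺) = multipartiteAdj ι α + T := by
  ext u v
  rw [Matrix.add_apply, ← hT.abs_apply, abs_add_eq_two_nsmul_posPart, Matrix.smul_apply, map_apply]

lemma isZeroOne_posPart (hT : IsBalancedSigning T) : IsZeroOne (T.map (·⁺)) := by
  intro u v
  have habs : |T u v| = 0 ∨ |T u v| = 1 := by
    rw [hT.abs_apply, multipartiteAdj_apply]
    split_ifs <;> simp
  rcases habs with h | h
  · simp [abs_eq_zero.1 h]
  · rcases (abs_eq zero_le_one).1 h with h | h <;> simp [h]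

lemma apply_self (hT : IsBalancedSigning T) (u : ι × α) : T u u = 0 := by
  rw [← abs_eq_zero, hT.abs_apply, multipartiteAdj_apply, if_pos rfl]

variable [Fintype ι]

lemma mul_multipartiteAdj (hT : IsBalancedSigning T) : T * multipartiteAdj ι α = 0 := by
  ext u v
  rw [mul_apply, Fintype.sum_prod_type]
  refine Finset.sum_eq_zero fun j _ => ?_
  calc ∑ y, T u (j, y) * multipartiteAdj ι α (j, y) v
    _ = (∑ y, T u (j, y)) * if j = v.1 then 0 else 1 := by
      rw [Finset.sum_mul]
      exact Finset.sum_congr rfl fun y _ => by rw [multipartiteAdj_apply]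
    _ = 0 := by rw [hT.sum_part, zero_mul]

lemma multipartiteAdj_mul (hT : IsBalancedSigning T) : multipartiteAdj ι α * T = 0 := by
  rw [← transpose_inj, transpose_mul, hT.transpose_eq, multipartiteAdj_transpose,
    hT.mul_multipartiteAdj, transpose_zero]

lemma four_smul_posPart_mul_self (hT : IsBalancedSigning T) :
    4 • (T.map (·⁺) * T.map (·⁺)) = multipartiteAdj ι α * multipartiteAdj ι α + T * T :=
  calc 4 • (T.map (·⁺) * T.map (·⁺))
    _ = (2 • T.map (·⁺)) * (2 • T.map (·⁺)) := by rw [smul_mul_smul_comm]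
    _ = (multipartiteAdj ι α + T) * (multipartiteAdj ι α + T) := by rw [hT.two_smul_posPart]
    _ = multipartiteAdj ι α * multipartiteAdj ι α + T * T := by
      rw [add_mul, mul_add, mul_add, hT.mul_multipartiteAdj, hT.multipartiteAdj_mul, add_zero,
        zero_add]

lemma two_mul_sum_posPart (hT : IsBalancedSigning T) (u : ι × α) :
    2 * ∑ v, (T u v)⁺ = (Fintype.card ι - 1) * Fintype.card α := by
  have hsum : ∑ v, T u v = 0 := by
    simp only [Fintype.sum_prod_type, hT.sum_part, Finset.sum_const_zero]
  have hentry (v : ι × α) : 2 * (T u v)⁺ = multipartiteAdj ι α u v + T u v := by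
    rw [← hT.abs_apply, abs_add_eq_two_nsmul_posPart, two_nsmul, two_mul]
  rw [Finset.mul_sum, Finset.sum_congr rfl fun v _ => hentry v, Finset.sum_add_distrib, hsum,
    sum_multipartiteAdj, add_zero]

theorem isDezaAdj_posPart [DecidableEq α] (hT : IsBalancedSigning T) {k b a : ℤ}
    (hk : (Fintype.card ι - 1 : ℤ) * Fintype.card α = 2 * k)
    (hsq : ∀ u v, u ≠ v →
      (multipartiteAdj ι α * multipartiteAdj ι α + T * T) u v ∈ ({4 * a, 4 * b} : Set ℤ)) :
    IsDezaAdj (T.map (·⁺)) k b a := by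
  refine .of_mul_self_apply hT.isZeroOne_posPart ?_ (fun u => ?_) (fun u => ?_)
    fun u v huv => ?_
  · rw [← transpose_map, hT.transpose_eq]
  · rw [map_apply, hT.apply_self, posPart_zero]
  · have h := hT.two_mul_sum_posPart u
    simp only [map_apply]
    linarith
  · have h := hsq u v huv
    rw [← hT.four_smul_posPart_mul_self, Matrix.smul_apply, nsmul_eq_mul] at h
    rw [Set.mem_insert_iff, Set.mem_singleton_iff] at h
    push_cast at h
    exact h.imp (fun h => by linarith) (fun h => by linarith)

end IsBalancedSigning

end Signing

section Coloring

/-- A colouring of the edges of the complete graph on `ι` by the elements of `κ` other than `z`, in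
which every colour class is 2-regular and any two vertices are joined by exactly one monochromatic
path of length two. The label `z` is reserved for the diagonal. -/
structure IsTwoPathColoring {ι κ : Type*} [Fintype ι] [DecidableEq κ] (c : ι → ι → κ) (z : κ) :
    Prop where
  symm : ∀ i j, c i j = c j i
  eq_iff : ∀ i j, c i j = z ↔ i = j
  card_fiber : ∀ i e, e ≠ z → Finset.card {k | c i k = e} = 2
  existsUnique : ∀ i j, i ≠ j → ∃! k, c i k = c k j

namespace IsTwoPathColoring

variable {ι κ : Type*} [Fintype ι] [DecidableEq κ] {c : ι → ι → κ} {z : κ}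

lemma sum_comp [Fintype κ] (hc : IsTwoPathColoring c z) (i : ι) {f : κ → ℤ} (hf : f z = 0) :
    ∑ k, f (c i k) = 2 * ∑ e, f e := by
  rw [← Finset.sum_fiberwise' Finset.univ (c i) f, Finset.mul_sum]
  refine Finset.sum_congr rfl fun e _ => ?_
  by_cases he : e = z
  · simp [he, hf]
  · rw [Finset.sum_const, hc.card_fiber i e he, two_nsmul, two_mul]

lemma comp_equiv {ι' : Type*} [Fintype ι'] (hc : IsTwoPathColoring c z) (σ : ι' ≃ ι) :
    IsTwoPathColoring (fun i j => c (σ i) (σ j)) z where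
  symm i j := hc.symm _ _
  eq_iff i j := (hc.eq_iff _ _).trans σ.apply_eq_iff_eq
  card_fiber i e he := by
    rw [← hc.card_fiber (σ i) e he]
    exact Finset.card_equiv σ (by simp)
  existsUnique i j hij :=
    (σ.existsUnique_congr_right (q := fun k => c (σ i) k = c k (σ j))).2
      (hc.existsUnique _ _ (σ.injective.ne hij))

end IsTwoPathColoring

/-- The distance of `d` from `0` on a cycle of odd length `2p + 1`, used as a colour. -/
def cyclicDist (p : ℕ) (d : ZMod (2 * p + 1)) : Fin (p + 1) :=
  ⟨d.valMinAbs.natAbs, by have := d.natAbs_valMinAbs_le; omega⟩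

variable {p : ℕ}

lemma cyclicDist_eq_iff {d d' : ZMod (2 * p + 1)} :
    cyclicDist p d = cyclicDist p d' ↔ d = d' ∨ d = -d' := by
  rw [cyclicDist, cyclicDist, Fin.mk.injEq, ZMod.natAbs_valMinAbs_eq_natAbs_valMinAbs]

lemma cyclicDist_natCast (e : Fin (p + 1)) : cyclicDist p (e : ℕ) = e := by
  have he : (e : ℕ) ≤ (2 * p + 1) / 2 := by omega
  ext
  simp only [cyclicDist, ZMod.valMinAbs_natCast_of_le_half he, Int.natAbs_natCast]

lemma cyclicDist_eq_zero_iff {d : ZMod (2 * p + 1)} : cyclicDist p d = 0 ↔ d = 0 := by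
  simp [cyclicDist, Fin.ext_iff]

lemma two_mul_succ_eq_one (p : ℕ) : (2 : ZMod (2 * p + 1)) * (p + 1) = 1 := by
  have hzero := ZMod.natCast_self (2 * p + 1)
  push_cast at hzero
  linear_combination hzero

theorem isTwoPathColoring_cyclicDist (p : ℕ) :
    IsTwoPathColoring (fun i j => cyclicDist p (i - j)) 0 where
  symm i j := cyclicDist_eq_iff.2 (.inr (neg_sub j i).symm)
  eq_iff i j := cyclicDist_eq_zero_iff.trans sub_eq_zero
  card_fiber i e he := by
    let d : ZMod (2 * p + 1) := ((e : ℕ) : ZMod (2 * p + 1))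
    have hdist : cyclicDist p d = e := cyclicDist_natCast e
    have hfiber : ({k | cyclicDist p (i - k) = e} : Finset _) = {i - d, i + d} := by
      ext k
      simp only [Finset.mem_filter_univ, Finset.mem_insert, Finset.mem_singleton]
      rw [← hdist, cyclicDist_eq_iff]
      refine or_congr ?_ ?_ <;> constructor <;> intro h <;> linear_combination -h
    rw [hfiber, Finset.card_pair]
    intro h
    apply he
    rw [← hdist, cyclicDist_eq_zero_iff]
    linear_combination (-d) * two_mul_succ_eq_one p - (p + 1 : ZMod (2 * p + 1)) * h
  existsUnique i j hij := by
    -- `p + 1` is the inverse of `2`, so this is the midpoint of `i` and `j`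
    refine ⟨(p + 1) * (i + j), ?_, fun k hk => ?_⟩
    · congr 1
      linear_combination (-(i + j)) * two_mul_succ_eq_one p
    · rcases cyclicDist_eq_iff.1 hk with h | h
      · linear_combination (-k) * two_mul_succ_eq_one p - (p + 1 : ZMod (2 * p + 1)) * h
      · exact absurd (by linear_combination h) hij

theorem exists_isTwoPathColoring {ι : Type*} [Fintype ι] (hι : Fintype.card ι = 2 * p + 1) :
    ∃ c : ι → ι → Fin (p + 1), IsTwoPathColoring c 0 :=
  ⟨_, (isTwoPathColoring_cyclicDist p).comp_equiv
    (Fintype.equivOfCardEq (hι.trans (ZMod.card _).symm))⟩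

end Coloring

section HadamardCore

variable {α : Type*} [DecidableEq α] {H : Matrix α α ℤ}

/-- The Hadamard matrix `H` normalised to have all ones in row `z`, with row `z` then replaced by
zeros. -/
def hadamardCore (H : Matrix α α ℤ) (z : α) : Matrix α α ℤ :=
  of fun e x => if e = z then 0 else H e x * H z x

lemma hadamardCore_self (z x : α) : hadamardCore H z z x = 0 := if_pos rfl

lemma hadamardCore_of_ne {e z : α} (he : e ≠ z) (x : α) :
    hadamardCore H z e x = H e x * H z x := if_neg he

variable [Fintype α]

lemma abs_apply_of_isHadamard (hH : H.IsHadamard) (e x : α) : |H e x| = 1 :=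
  (abs_eq zero_le_one).2 (Unitary.mem_iff_eq_one_or_eq_neg_one.1 (hH.apply_mem e x))

lemma apply_mul_self_of_isHadamard (hH : H.IsHadamard) (e x : α) : H e x * H e x = 1 := by
  rw [← abs_mul_abs_self, abs_apply_of_isHadamard hH, one_mul]

lemma sum_mul_of_isHadamard (hH : H.IsHadamard) (e f : α) :
    ∑ x, H e x * H f x = if e = f then (Fintype.card α : ℤ) else 0 := by
  simpa [mul_apply, one_apply] using congrFun₂ hH.mul_conjTranspose e f

lemma abs_hadamardCore (hH : H.IsHadamard) {e z : α} (he : e ≠ z) (x : α) :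
    |hadamardCore H z e x| = 1 := by
  rw [hadamardCore_of_ne he, abs_mul, abs_apply_of_isHadamard hH, abs_apply_of_isHadamard hH,
    one_mul]

lemma sum_hadamardCore (hH : H.IsHadamard) (z e : α) : ∑ x, hadamardCore H z e x = 0 := by
  by_cases he : e = z
  · simp only [he, hadamardCore_self, Finset.sum_const_zero]
  · simp only [hadamardCore_of_ne he, sum_mul_of_isHadamard hH, if_neg he]

lemma hadamardCore_mul_transpose_apply (hH : H.IsHadamard) (z : α) {e f : α} (he : e ≠ z) :
    (hadamardCore H z * (hadamardCore H z)ᵀ) e f = if e = f then (Fintype.card α : ℤ) else 0 := by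
  simp only [mul_apply, transpose_apply]
  by_cases hf : f = z
  · simp [hf, hadamardCore_self, he]
  · have hterm (x : α) : H e x * H z x * (H f x * H z x) = H e x * H f x := by
      rw [mul_mul_mul_comm, apply_mul_self_of_isHadamard hH, mul_one]
    simp only [hadamardCore_of_ne he, hadamardCore_of_ne hf, hterm, sum_mul_of_isHadamard hH]

lemma transpose_mul_hadamardCore (hH : H.IsHadamard) (z : α) :
    (hadamardCore H z)ᵀ * hadamardCore H z = (Fintype.card α : ℤ) • 1 - allOnes α := by
  ext x y
  have hterm (e : α) : hadamardCore H z e x * hadamardCore H z e y =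
      H e x * H e y * (H z x * H z y) - if e = z then 1 else 0 := by
    by_cases he : e = z
    · rw [he, hadamardCore_self, zero_mul, mul_mul_mul_comm, apply_mul_self_of_isHadamard hH,
        apply_mul_self_of_isHadamard hH, if_pos rfl, mul_one, sub_self]
    · rw [hadamardCore_of_ne he, hadamardCore_of_ne he, mul_mul_mul_comm, if_neg he, sub_zero]
  have hcol : ∑ e, H e x * H e y = (Fintype.card α : ℤ) * (1 : Matrix α α ℤ) x y := by
    simpa [mul_apply, one_apply] using congrFun₂ hH.conjTranspose_mul x y
  simp only [mul_apply, transpose_apply, hterm, Finset.sum_sub_distrib, ← Finset.sum_mul, hcol,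
    Matrix.sub_apply, Matrix.smul_apply, smul_eq_mul]
  by_cases hxy : x = y
  · simp [hxy, allOnes, apply_mul_self_of_isHadamard hH]
  · simp [hxy, allOnes]

end HadamardCore

section ColoredSigning

variable {ι κ α : Type*}

/-- The block matrix whose `(i, j)` block is the rank-one matrix `rᵀ r`, where `r` is the row of `G`
indexed by the colour `c i j`. -/
def coloredSigning (c : ι → ι → κ) (G : Matrix κ α ℤ) : Matrix (ι × α) (ι × α) ℤ :=
  of fun u v => G (c u.1 v.1) u.2 * G (c u.1 v.1) v.2

lemma coloredSigning_apply (c : ι → ι → κ) (G : Matrix κ α ℤ) (u v : ι × α) :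
    coloredSigning c G u v = G (c u.1 v.1) u.2 * G (c u.1 v.1) v.2 := rfl

variable [Fintype ι] [Fintype α] [DecidableEq α] {c : ι → ι → α} {z : α} {H : Matrix α α ℤ}

lemma isBalancedSigning_coloredSigning [DecidableEq ι] (hc : IsTwoPathColoring c z)
    (hH : H.IsHadamard) : IsBalancedSigning (coloredSigning c (hadamardCore H z)) where
  transpose_eq := by
    ext u v
    rw [transpose_apply, coloredSigning_apply, coloredSigning_apply, hc.symm, mul_comm]
  abs_apply u v := by
    rw [coloredSigning_apply, multipartiteAdj_apply]
    by_cases huv : u.1 = v.1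
    · rw [(hc.eq_iff _ _).2 huv, hadamardCore_self, zero_mul, abs_zero, if_pos huv]
    · have hcolor : c u.1 v.1 ≠ z := mt (hc.eq_iff _ _).1 huv
      rw [abs_mul, abs_hadamardCore hH hcolor, abs_hadamardCore hH hcolor, mul_one, if_neg huv]
  sum_part u j := by
    simp only [coloredSigning_apply, ← Finset.mul_sum, sum_hadamardCore hH, mul_zero]

lemma coloredSigning_mul_self_apply (c : ι → ι → α) (z : α) (hH : H.IsHadamard) (u v : ι × α) :
    (coloredSigning c (hadamardCore H z) * coloredSigning c (hadamardCore H z)) u v =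
      Fintype.card α * ∑ k, if c u.1 k = c k v.1 then
        hadamardCore H z (c u.1 k) u.2 * hadamardCore H z (c u.1 k) v.2 else 0 := by
  set G := hadamardCore H z with hG
  rw [mul_apply, Fintype.sum_prod_type, Finset.mul_sum]
  refine Finset.sum_congr rfl fun k _ => ?_
  calc ∑ y, coloredSigning c G u (k, y) * coloredSigning c G (k, y) v
    _ = G (c u.1 k) u.2 * (G * Gᵀ) (c u.1 k) (c k v.1) * G (c k v.1) v.2 := by
      rw [mul_apply, Finset.mul_sum, Finset.sum_mul]
      refine Finset.sum_congr rfl fun y _ => ?_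
      simp only [coloredSigning_apply, transpose_apply]
      ring
    _ = Fintype.card α * if c u.1 k = c k v.1 then G (c u.1 k) u.2 * G (c u.1 k) v.2 else 0 := by
      by_cases hz : c u.1 k = z
      · simp [hz, hG, hadamardCore_self]
      · rw [hG, hadamardCore_mul_transpose_apply hH z hz]
        split_ifs with hcolor
        · rw [hcolor]
          ring
        · simp

lemma coloredSigning_mul_self_apply_of_eq (hc : IsTwoPathColoring c z) (hH : H.IsHadamard)
    (i : ι) {x y : α} (hxy : x ≠ y) :
    (coloredSigning c (hadamardCore H z) * coloredSigning c (hadamardCore H z)) (i, x) (i, y) =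
      -(2 * Fintype.card α) := by
  have hgram : ∑ e, hadamardCore H z e x * hadamardCore H z e y = -1 := by
    have h := congrFun₂ (transpose_mul_hadamardCore hH z) x y
    rwa [mul_apply, Matrix.sub_apply, Matrix.smul_apply, one_apply_ne hxy, smul_zero,
      zero_sub] at h
  simp only [coloredSigning_mul_self_apply c z hH, hc.symm _ i, if_true]
  rw [hc.sum_comp i (f := fun e => hadamardCore H z e x * hadamardCore H z e y)
    (by rw [hadamardCore_self, zero_mul]), hgram]
  ring

lemma abs_coloredSigning_mul_self_apply_of_ne (hc : IsTwoPathColoring c z) (hH : H.IsHadamard)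
    {u v : ι × α} (huv : u.1 ≠ v.1) :
    |(coloredSigning c (hadamardCore H z) * coloredSigning c (hadamardCore H z)) u v| =
      Fintype.card α := by
  obtain ⟨k, hk, hunique⟩ := hc.existsUnique u.1 v.1 huv
  have hcolor : c u.1 k ≠ z := fun hz =>
    huv (((hc.eq_iff _ _).1 hz).trans ((hc.eq_iff _ _).1 (hk.symm.trans hz)))
  rw [coloredSigning_mul_self_apply c z hH,
    Fintype.sum_eq_single k fun l hl => if_neg fun h => hl (hunique l h), if_pos hk, abs_mul,
    abs_mul, abs_hadamardCore hH hcolor, abs_hadamardCore hH hcolor, mul_one, mul_one, Nat.abs_cast]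

theorem multipartiteAdj_sq_add_coloredSigning_sq_apply_mem [DecidableEq ι]
    {n : ℤ} (hα : (Fintype.card α : ℤ) = n) (hι : (Fintype.card ι : ℤ) = 2 * n - 1) (hn : Even n)
    (hc : IsTwoPathColoring c z) (hH : H.IsHadamard) {u v : ι × α} (huv : u ≠ v) :
    (multipartiteAdj ι α * multipartiteAdj ι α +
      coloredSigning c (hadamardCore H z) * coloredSigning c (hadamardCore H z)) u v ∈
      ({4 * (n * (n - 2) / 2), 4 * (n * (n - 1) / 2)} : Set ℤ) := by
  have ha := Int.two_mul_ediv_two_of_even (hn.mul_right (n - 2))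
  have hb := Int.two_mul_ediv_two_of_even (hn.mul_right (n - 1))
  rw [Matrix.add_apply, multipartiteAdj_mul_self_apply, hι]
  by_cases hpart : u.1 = v.1
  · obtain ⟨i, x⟩ := u
    obtain ⟨j, y⟩ := v
    obtain rfl : i = j := hpart
    have hxy : x ≠ y := fun h => huv (by rw [h])
    rw [coloredSigning_mul_self_apply_of_eq hc hH i hxy, if_pos rfl, hα]
    exact .inl (by linear_combination -2 * ha)
  · rw [if_neg hpart, hα]
    rcases (abs_eq (Nat.cast_nonneg _)).1 (abs_coloredSigning_mul_self_apply_of_ne hc hH hpart)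
      with h | h <;> rw [hα] at h
    · exact .inr (Set.mem_singleton_iff.2 (by linear_combination h - 2 * hb))
    · exact .inl (by linear_combination h - 2 * ha)

end ColoredSigning

/-- a Hadamard matrix of even order n yields a twin Deza graph with
parameters ((2n−1)n, (n−1)n, n(n−1)/2, n(n−2)/2). -/
theorem twin_deza_from_hadamard (n : ℕ) (hn : Even n)
    (H : Matrix (Fin n) (Fin n) ℤ)
    (hH : ∀ i j, H i j = 1 ∨ H i j = -1)
    (hHH : H * Hᵀ = (n : ℤ) • (1 : Matrix (Fin n) (Fin n) ℤ)) :
    ∃ A B : Matrix (Fin (2 * n - 1) × Fin n) (Fin (2 * n - 1) × Fin n) ℤ,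
      A + B = (allOnes (Fin (2 * n - 1)) - 1) ⊗ₖ allOnes (Fin n) ∧
      IsDezaAdj A (((n : ℤ) - 1) * n) ((n : ℤ) * ((n : ℤ) - 1) / 2)
        ((n : ℤ) * ((n : ℤ) - 2) / 2) ∧
      IsDezaAdj B (((n : ℤ) - 1) * n) ((n : ℤ) * ((n : ℤ) - 1) / 2)
        ((n : ℤ) * ((n : ℤ) - 2) / 2) := by
  obtain _ | p := n
  · exact ⟨0, 0, Subsingleton.elim _ _, .of_isEmpty .., .of_isEmpty ..⟩
  have hHad : H.IsHadamard := .of_mul_conjTranspose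
    (fun i j => Unitary.mem_iff_eq_one_or_eq_neg_one.2 (hH i j)) (by simpa using hHH)
    (IsRegular.of_ne_zero (Nat.cast_ne_zero.2 Fintype.card_ne_zero))
  have hι : Fintype.card (Fin (2 * (p + 1) - 1)) = 2 * p + 1 := Fintype.card_fin _
  obtain ⟨c, hc⟩ := exists_isTwoPathColoring hι
  have hT := isBalancedSigning_coloredSigning hc hHad
  have hk : ((Fintype.card (Fin (2 * (p + 1) - 1)) : ℤ) - 1) * Fintype.card (Fin (p + 1)) =
      2 * ((((p + 1 : ℕ) : ℤ) - 1) * (p + 1 : ℕ)) := by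
    rw [hι, Fintype.card_fin]
    push_cast
    ring
  have hsq := fun u v (huv : u ≠ v) => multipartiteAdj_sq_add_coloredSigning_sq_apply_mem
    (by rw [Fintype.card_fin]) (by rw [hι]; push_cast; ring) ((Int.even_coe_nat _).2 hn) hc hHad
    huv
  exact ⟨_, _, hT.posPart_add_posPart_neg, hT.isDezaAdj_posPart hk hsq,
    hT.neg.isDezaAdj_posPart hk (by simpa only [neg_mul_neg] using hsq)⟩
end

section
/- Let n be even and suppose there exists a Hadamard matrix of order n (an n×n (±1)-matrix H with H·Hᵀ = n·I). Then there exists a Siamese twin Deza reflexive graph with parameters ((2n−1)n, n², n(n+1)/2, n²/2) sharing the entries of N = I_{2n−1} ⊗ J_n: there exist (2n−1)n×(2n−1)n (0,1)-matrices K and L with K + L = (J_{2n−1} − I_{2n−1}) ⊗ J_n (in particular N, K, L are pairwise disjoint) such that each of N + K and N + L is the adjacency matrix of a Deza reflexive graph with parameters ((2n−1)n, n², n(n+1)/2, n²/2). -/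
open Matrix Kronecker

/-- `M` is the adjacency matrix of a Deza reflexive graph with parameters (|ι|, k, b, a):
a symmetric (0,1)-matrix with all-ones diagonal, row sums k, and
M² = a·X + b·Y + k·I for some (0,1)-matrices X, Y with X + Y + I = J. -/
def IsDezaReflexiveAdj {ι : Type*} [Fintype ι] [DecidableEq ι]
    (M : Matrix ι ι ℤ) (k b a : ℤ) : Prop :=
  IsZeroOne M ∧ Mᵀ = M ∧ (∀ i, M i i = 1) ∧
  M * allOnes ι = k • allOnes ι ∧
  ∃ X Y : Matrix ι ι ℤ, IsZeroOne X ∧ IsZeroOne Y ∧ X + Y + 1 = allOnes ι ∧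
    M * M = a • X + b • Y + k • (1 : Matrix ι ι ℤ)

/-!
Normalise `H` so that one of its rows is all ones. For the rows `rᵢ` of `H`, the matrices
`Cᵢ = rᵢᵀ rᵢ` satisfy `Cᵢ Cⱼ = δᵢⱼ n Cᵢ` and `∑ᵢ Cᵢ = n I`, and the all-ones row gives `C₀ = J`.

Let `G` be an abelian group of odd order `2n - 1` and let `f` identify each `g` with `-g`, so that
`f` takes exactly `n` values. Let `S` have the block `C_{f (a - b)}` in position `(a, b)`, with a
fixed sign `ε` off the block diagonal. In the block `(a, b)`, `a ≠ b`, of `S²` the only surviving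
term comes from the midpoint `d` with `2d = a + b`, and it is `± n C_{f (a - d)}`. In a diagonal
block the signs cancel, and every `Cᵢ` except `C₀` occurs twice, which gives `n (2n I - J)`. So the
off-diagonal entries of `S²` are `± n` for both signs `ε`, and `(J + S) / 2` is the adjacency matrix
of a Deza reflexive graph. The two choices of `ε` give the twins.
-/

section DezaCriteria

variable {κ : Type*}

theorem isDezaReflexiveAdj_of_mul_self_apply [Fintype κ] [DecidableEq κ] {M : Matrix κ κ ℤ}
    {k b a : ℤ} (h01 : IsZeroOne M) (hsymm : M.IsSymm) (hdiag : ∀ i, M i i = 1)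
    (hsum : ∀ i, ∑ j, M i j = k)
    (hoff : ∀ i j, i ≠ j → (M * M) i j = a ∨ (M * M) i j = b) :
    IsDezaReflexiveAdj M k b a := by
  have hsq_diag (i : κ) : (M * M) i i = k := by
    rw [mul_apply, ← hsum i]
    refine Finset.sum_congr rfl fun j _ => ?_
    rw [hsymm.apply i j]
    rcases h01 i j with h | h <;> simp [h]
  refine ⟨h01, hsymm, hdiag, ?_,
    of fun i j => if i ≠ j ∧ (M * M) i j = a then 1 else 0,
    of fun i j => if i ≠ j ∧ (M * M) i j ≠ a then 1 else 0, ?_, ?_, ?_, ?_⟩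
  · ext i j
    simp [mul_apply, allOnes, hsum]
  · intro i j
    simp only [of_apply]
    split_ifs <;> simp
  · intro i j
    simp only [of_apply]
    split_ifs <;> simp
  · ext i j
    by_cases hij : i = j <;> by_cases ha : (M * M) i j = a <;> simp_all [allOnes]
  · ext i j
    by_cases hij : i = j
    · subst hij
      simp [hsq_diag, Matrix.intCast_apply]
    · by_cases ha : (M * M) i j = a
      · simp [hij, ha, Matrix.intCast_apply]
      · simp [hij, ha, ← (hoff i j hij).resolve_left ha, Matrix.intCast_apply]

/-- The (0,1)-matrix marking the entries of `S` equal to `1`; for a sign matrix `S` it is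
`(J + S) / 2`. -/
def positiveSupport (S : Matrix κ κ ℤ) : Matrix κ κ ℤ :=
  of fun i j => if S i j = 1 then 1 else 0

theorem isZeroOne_positiveSupport (S : Matrix κ κ ℤ) : IsZeroOne (positiveSupport S) := by
  intro i j
  simp only [positiveSupport, of_apply]
  split_ifs <;> simp

theorem two_mul_positiveSupport_apply {S : Matrix κ κ ℤ} {i j : κ} (hS : IsUnit (S i j)) :
    2 * positiveSupport S i j = 1 + S i j := by
  rcases Int.isUnit_iff.mp hS with h | h <;> simp [positiveSupport, h]

theorem four_mul_positiveSupport_mul_self_apply [Fintype κ] {S : Matrix κ κ ℤ} {r : ℤ}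
    (hS : ∀ i j, IsUnit (S i j)) (hsymm : S.IsSymm) (hsum : ∀ i, ∑ j, S i j = r) (i j : κ) :
    4 * (positiveSupport S * positiveSupport S) i j =
      Fintype.card κ + 2 * r + (S * S) i j := by
  have hcol : ∑ l, S l j = r := by simpa only [hsymm.apply] using hsum j
  calc 4 * (positiveSupport S * positiveSupport S) i j
      = ∑ l, (1 + S i l) * (1 + S l j) := by
        rw [mul_apply, Finset.mul_sum]
        refine Finset.sum_congr rfl fun l _ => ?_
        rw [← two_mul_positiveSupport_apply (hS i l), ← two_mul_positiveSupport_apply (hS l j)]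
        ring
    _ = ∑ l, (1 + S i l + S l j + S i l * S l j) :=
        Finset.sum_congr rfl fun l _ => by ring
    _ = Fintype.card κ + 2 * r + (S * S) i j := by
        simp only [Finset.sum_add_distrib, hsum, hcol, mul_apply, Finset.sum_const,
          Finset.card_univ, nsmul_eq_mul, mul_one]
        ring

theorem isDezaReflexiveAdj_positiveSupport [Fintype κ] [DecidableEq κ] {S : Matrix κ κ ℤ}
    {r μ k b a : ℤ} (hS : ∀ i j, IsUnit (S i j)) (hsymm : S.IsSymm)
    (hdiag : ∀ i, S i i = 1) (hsum : ∀ i, ∑ j, S i j = r)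
    (hoff : ∀ i j, i ≠ j → (S * S) i j = μ ∨ (S * S) i j = -μ)
    (hk : 2 * k = Fintype.card κ + r) (hb : 4 * b = Fintype.card κ + 2 * r + μ)
    (ha : 4 * a = Fintype.card κ + 2 * r - μ) :
    IsDezaReflexiveAdj (positiveSupport S) k b a := by
  refine isDezaReflexiveAdj_of_mul_self_apply (isZeroOne_positiveSupport S) ?_ ?_ ?_ ?_
  · ext i j
    simp [positiveSupport, hsymm.apply]
  · intro i
    simp [positiveSupport, hdiag]
  · intro i
    have : 2 * ∑ j, positiveSupport S i j = 2 * k := by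
      simp [Finset.mul_sum, two_mul_positiveSupport_apply (hS i _), Finset.sum_add_distrib, hsum,
        hk]
    linarith
  · intro i j hij
    have hsq := four_mul_positiveSupport_mul_self_apply hS hsymm hsum i j
    rcases hoff i j hij with h | h <;> rw [h] at hsq
    · exact Or.inr (by linarith)
    · exact Or.inl (by linarith)

end DezaCriteria

section Hadamard

variable {ι : Type*}

theorem exists_isHadamard_row_eq_one {R : Type*} [CommSemiring R] [StarRing R]
    [Fintype ι] [DecidableEq ι] {H : Matrix ι ι R} (hH : H.IsHadamard) (i₀ : ι) :
    ∃ H' : Matrix ι ι R, H'.IsHadamard ∧ ∀ j, H' i₀ j = 1 := by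
  let D : Matrix ι ι R := diagonal fun j => star (H i₀ j)
  have hunit (j : ι) : star (H i₀ j) * H i₀ j = 1 :=
    Unitary.star_mul_self_of_mem (hH.apply_mem i₀ j)
  have hDDs : D * Dᴴ = 1 := by
    simp [D, diagonal_conjTranspose, Pi.star_def, hunit]
  have hDsD : Dᴴ * D = 1 := by
    simp [D, diagonal_conjTranspose, Pi.star_def, mul_comm (H i₀ _), hunit]
  refine ⟨H * D, ⟨fun i j => ?_, ?_, ?_⟩, fun j => ?_⟩
  · rw [mul_diagonal]
    exact mul_mem (hH.apply_mem i j) (Unitary.star_mem (hH.apply_mem i₀ j))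
  · calc H * D * (H * D)ᴴ = H * (D * Dᴴ) * Hᴴ := by
          simp only [conjTranspose_mul, Matrix.mul_assoc]
      _ = (Fintype.card ι : R) • 1 := by rw [hDDs, Matrix.mul_one, hH.mul_conjTranspose]
  · calc (H * D)ᴴ * (H * D) = Dᴴ * (Hᴴ * H) * D := by
          simp only [conjTranspose_mul, Matrix.mul_assoc]
      _ = (Fintype.card ι : R) • 1 := by
          rw [hH.conjTranspose_mul, mul_smul_comm, Matrix.mul_one, smul_mul_assoc, hDsD]
  · rw [mul_diagonal, mul_comm, hunit]

/-- The auxiliary matrix `rᵢᵀ rᵢ` of the `i`-th row `rᵢ` of `H`. -/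
def rowOuter (H : Matrix ι ι ℤ) (i : ι) : Matrix ι ι ℤ :=
  vecMulVec (H i) (H i)

theorem isSymm_rowOuter (H : Matrix ι ι ℤ) (i : ι) : (rowOuter H i).IsSymm :=
  transpose_vecMulVec _ _

theorem rowOuter_eq_allOnes {H : Matrix ι ι ℤ} {i₀ : ι} (h₀ : ∀ j, H i₀ j = 1) :
    rowOuter H i₀ = allOnes ι := by
  ext x y
  simp [rowOuter, vecMulVec_apply, allOnes, h₀]

variable [Fintype ι] [DecidableEq ι] {H : Matrix ι ι ℤ}

theorem isUnit_rowOuter_apply (hH : H.IsHadamard) (i x y : ι) : IsUnit (rowOuter H i x y) :=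
  have hunit (z : ι) : IsUnit (H i z) :=
    Int.isUnit_iff.mpr (Unitary.mem_iff_eq_one_or_eq_neg_one.mp (hH.apply_mem i z))
  (hunit x).mul (hunit y)

theorem dotProduct_row_row (hH : H.IsHadamard) (i j : ι) :
    H i ⬝ᵥ H j = if i = j then (Fintype.card ι : ℤ) else 0 := by
  simpa [mul_apply, dotProduct, one_apply] using congrFun₂ hH.mul_conjTranspose i j

theorem rowOuter_mul_self (hH : H.IsHadamard) (i : ι) :
    rowOuter H i * rowOuter H i = (Fintype.card ι : ℤ) • rowOuter H i := by
  rw [rowOuter, vecMulVec_mul_vecMulVec, dotProduct_row_row hH, if_pos rfl, vecMulVec_smul]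

theorem rowOuter_mul_of_ne (hH : H.IsHadamard) {i j : ι} (hij : i ≠ j) :
    rowOuter H i * rowOuter H j = 0 := by
  rw [rowOuter, rowOuter, vecMulVec_mul_vecMulVec, dotProduct_row_row hH, if_neg hij, zero_smul,
    vecMulVec_zero]

theorem sum_rowOuter (hH : H.IsHadamard) :
    ∑ i, rowOuter H i = (Fintype.card ι : ℤ) • (1 : Matrix ι ι ℤ) := by
  rw [← hH.conjTranspose_mul]
  ext x y
  simp [Matrix.sum_apply, rowOuter, vecMulVec_apply, mul_apply]

theorem sum_rowOuter_apply (hH : H.IsHadamard) {i₀ : ι} (h₀ : ∀ j, H i₀ j = 1) (i x : ι) :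
    ∑ y, rowOuter H i x y = if i = i₀ then (Fintype.card ι : ℤ) else 0 := by
  have hdot : ∑ y, H i y = if i = i₀ then (Fintype.card ι : ℤ) else 0 := by
    simpa [dotProduct, h₀] using dotProduct_row_row hH i i₀
  simp only [rowOuter, vecMulVec_apply, ← Finset.mul_sum, hdot]
  split_ifs with h <;> simp [h, h₀]

end Hadamard

section QuotientByNeg

variable {G ι : Type*} [AddCommGroup G]

/-- `f` exhibits `ι` as the quotient of `G` by the action of `{1, -1}`. -/
structure IsQuotientByNeg (f : G → ι) : Prop where
  surjective : Function.Surjective f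
  apply_eq_iff : ∀ a b, f a = f b ↔ a = b ∨ a = -b

theorem bijective_two_nsmul_of_odd_card [Fintype G] (hG : Odd (Fintype.card G)) :
    Function.Bijective fun g : G => 2 • g :=
  (nsmulCoprime (by rwa [Nat.card_eq_fintype_card, Nat.coprime_two_right])).bijective

theorem eq_neg_self_iff_of_odd_card [Fintype G] (hG : Odd (Fintype.card G)) {g : G} :
    g = -g ↔ g = 0 := by
  rw [eq_neg_iff_add_eq_zero, ← two_nsmul]
  exact (bijective_two_nsmul_of_odd_card hG).injective.eq_iff' (smul_zero 2)

namespace IsQuotientByNeg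

variable {f : G → ι}

theorem apply_neg (hf : IsQuotientByNeg f) (g : G) : f (-g) = f g :=
  (hf.apply_eq_iff _ _).mpr (Or.inr rfl)

theorem apply_sub_comm (hf : IsQuotientByNeg f) (a b : G) : f (a - b) = f (b - a) := by
  rw [← neg_sub, hf.apply_neg]

theorem apply_eq_apply_zero_iff (hf : IsQuotientByNeg f) {g : G} : f g = f 0 ↔ g = 0 := by
  simp [hf.apply_eq_iff]

theorem existsUnique_apply_sub_eq [Fintype G] (hf : IsQuotientByNeg f)
    (hG : Odd (Fintype.card G)) {a b : G} (hab : a ≠ b) : ∃! d, f (a - d) = f (d - b) := by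
  have hmid (d : G) : f (a - d) = f (d - b) ↔ 2 • d = a + b := by
    have h₁ : a - d = d - b ↔ 2 • d = a + b := by
      rw [sub_eq_sub_iff_add_eq_add, two_nsmul, eq_comm]
    have h₂ : ¬ a - d = -(d - b) := by
      rw [neg_sub, sub_left_inj]
      exact hab
    rw [hf.apply_eq_iff, h₁, or_iff_left h₂]
  simpa only [hmid] using (bijective_two_nsmul_of_odd_card hG).existsUnique (a + b)

theorem card_fiber [Fintype G] [DecidableEq ι] (hf : IsQuotientByNeg f)
    (hG : Odd (Fintype.card G)) (i : ι) :
    (Finset.univ.filter fun g => f g = i).card = if i = f 0 then 1 else 2 := by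
  classical
  obtain ⟨g, rfl⟩ := hf.surjective i
  have hfiber : (Finset.univ.filter fun x => f x = f g) = {g, -g} := by
    ext x
    simp [hf.apply_eq_iff]
  rw [hfiber]
  split_ifs with h
  · simp [hf.apply_eq_apply_zero_iff.mp h]
  · exact Finset.card_pair fun hg =>
      h (congrArg f ((eq_neg_self_iff_of_odd_card hG).mp hg))

theorem sum_comp_add [Fintype G] [Fintype ι] {A : Type*} [AddCommMonoid A]
    (hf : IsQuotientByNeg f) (hG : Odd (Fintype.card G)) (F : ι → A) :
    ∑ g, F (f g) + F (f 0) = 2 • ∑ i, F i := by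
  classical
  have himage : Finset.univ.image f = Finset.univ := Finset.image_univ_of_surjective hf.surjective
  have hfiber (i : ι) : (Finset.univ.filter fun g => f g = i).card • F i +
      (if i = f 0 then F i else 0) = 2 • F i := by
    rw [hf.card_fiber hG]
    split_ifs <;> simp [two_nsmul]
  calc ∑ g, F (f g) + F (f 0)
      = ∑ i, ((Finset.univ.filter fun g => f g = i).card • F i + if i = f 0 then F i else 0) := by
        rw [Finset.sum_comp F f, himage, Finset.sum_add_distrib, Fintype.sum_ite_eq']
    _ = 2 • ∑ i, F i := by simp only [hfiber, Finset.smul_sum]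

end IsQuotientByNeg

theorem isQuotientByNeg_orbitRel_mk :
    IsQuotientByNeg (Quotient.mk (MulAction.orbitRel ℤˣ G)) where
  surjective := Quotient.mk_surjective
  apply_eq_iff a b := by
    rw [Quotient.eq, MulAction.orbitRel_apply, MulAction.mem_orbit_iff]
    constructor
    · rintro ⟨u, rfl⟩
      rcases Int.units_eq_one_or u with rfl | rfl <;> simp
    · rintro (rfl | rfl)
      · exact ⟨1, one_smul _ _⟩
      · exact ⟨-1, by simp⟩

theorem IsQuotientByNeg.equiv_comp {κ : Type*} {f : G → ι} (hf : IsQuotientByNeg f) (e : ι ≃ κ) :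
    IsQuotientByNeg (e ∘ f) where
  surjective := e.surjective.comp hf.surjective
  apply_eq_iff a b := e.injective.eq_iff.trans (hf.apply_eq_iff a b)

theorem exists_isQuotientByNeg [Fintype G] [Fintype ι]
    (hcard : Fintype.card G + 1 = 2 * Fintype.card ι) : ∃ f : G → ι, IsQuotientByNeg f := by
  classical
  have hG : Odd (Fintype.card G) := by
    rw [← Nat.not_even_iff_odd, ← Nat.even_add_one, hcard]
    exact even_two_mul _
  let r := MulAction.orbitRel ℤˣ G
  have hr : IsQuotientByNeg (Quotient.mk r) := isQuotientByNeg_orbitRel_mk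
  have hcard_quot : Fintype.card (Quotient r) = Fintype.card ι := by
    have := hr.sum_comp_add hG fun _ => 1
    simp only [Finset.sum_const, Finset.card_univ, smul_eq_mul, mul_one] at this
    omega
  exact ⟨_, hr.equiv_comp (Fintype.equivOfCardEq hcard_quot)⟩

end QuotientByNeg

section Twin

variable {G ι : Type*} [AddCommGroup G] [DecidableEq G]

/-- The block matrix over `G` with block `rowOuter H (f (a - b))` in position `(a, b)`, multiplied
by `ε` off the block diagonal. The values `ε = 1` and `ε = -1` give the two twins. -/
def twinSign (H : Matrix ι ι ℤ) (f : G → ι) (ε : ℤˣ) : Matrix (G × ι) (G × ι) ℤ :=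
  comp G G ι ι ℤ <| of fun a b =>
    (if a = b then 1 else ε : ℤˣ) • rowOuter H (f (a - b))

theorem twinSign_apply (H : Matrix ι ι ℤ) (f : G → ι) (ε : ℤˣ) (p q : G × ι) :
    twinSign H f ε p q =
      (if p.1 = q.1 then 1 else ε : ℤˣ) * rowOuter H (f (p.1 - q.1)) p.2 q.2 :=
  rfl

variable {H : Matrix ι ι ℤ} {f : G → ι}

theorem isSymm_twinSign (hf : IsQuotientByNeg f) (H : Matrix ι ι ℤ) (ε : ℤˣ) :
    (twinSign H f ε).IsSymm := by
  ext p q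
  rw [transpose_apply, twinSign_apply, twinSign_apply, hf.apply_sub_comm,
    (isSymm_rowOuter H _).apply]
  simp only [eq_comm]

theorem twinSign_apply_of_fst_eq (h₀ : ∀ x, H (f 0) x = 1) (ε : ℤˣ) {p q : G × ι}
    (hpq : p.1 = q.1) : twinSign H f ε p q = 1 := by
  simp [twinSign_apply, hpq, rowOuter_eq_allOnes h₀, allOnes]

theorem twinSign_mul_self_apply [Fintype G] [Fintype ι] (H : Matrix ι ι ℤ) (f : G → ι) (ε : ℤˣ)
    (p q : G × ι) :
    (twinSign H f ε * twinSign H f ε) p q =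
      ∑ d, ((if p.1 = d then 1 else ε : ℤˣ) * (if d = q.1 then 1 else ε : ℤˣ) : ℤ) *
        (rowOuter H (f (p.1 - d)) * rowOuter H (f (d - q.1))) p.2 q.2 := by
  rw [mul_apply, Fintype.sum_prod_type]
  refine Finset.sum_congr rfl fun d _ => ?_
  rw [mul_apply, Finset.mul_sum]
  refine Finset.sum_congr rfl fun x _ => ?_
  simp only [twinSign_apply]
  ring

variable [Fintype ι] [DecidableEq ι]

theorem isUnit_twinSign_apply (hH : H.IsHadamard) (f : G → ι) (ε : ℤˣ) (p q : G × ι) :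
    IsUnit (twinSign H f ε p q) :=
  (Units.isUnit _).mul (isUnit_rowOuter_apply hH _ _ _)

variable [Fintype G]

theorem sum_twinSign_apply (hH : H.IsHadamard) (hf : IsQuotientByNeg f)
    (h₀ : ∀ x, H (f 0) x = 1) (ε : ℤˣ) (p : G × ι) :
    ∑ q, twinSign H f ε p q = Fintype.card ι := by
  have hblock (d : G) : ∑ x, twinSign H f ε p (d, x) =
      if p.1 = d then (Fintype.card ι : ℤ) else 0 := by
    calc ∑ x, twinSign H f ε p (d, x)
        = (if p.1 = d then 1 else ε : ℤˣ) * ∑ x, rowOuter H (f (p.1 - d)) p.2 x := by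
          simp only [twinSign_apply, Finset.mul_sum]
      _ = if p.1 = d then (Fintype.card ι : ℤ) else 0 := by
          rw [sum_rowOuter_apply hH h₀]
          simp only [hf.apply_eq_apply_zero_iff, sub_eq_zero]
          split_ifs <;> simp
  rw [Fintype.sum_prod_type]
  simp only [hblock, Fintype.sum_ite_eq]

theorem twinSign_mul_self_apply_of_fst_eq (hH : H.IsHadamard) (hf : IsQuotientByNeg f)
    (hG : Odd (Fintype.card G)) (h₀ : ∀ x, H (f 0) x = 1) (ε : ℤˣ) {p q : G × ι}
    (hpq : p.1 = q.1) (hne : p.2 ≠ q.2) :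
    (twinSign H f ε * twinSign H f ε) p q = -Fintype.card ι := by
  have hsigns (d : G) :
      ((if p.1 = d then 1 else ε : ℤˣ) * (if d = p.1 then 1 else ε : ℤˣ) : ℤ) = 1 := by
    simp only [eq_comm (a := d), ← Units.val_mul, Int.units_mul_self, Units.val_one]
  have hsum : ∑ d, rowOuter H (f (p.1 - d)) p.2 q.2 = -1 := by
    have hfold := hf.sum_comp_add hG fun i => rowOuter H i p.2 q.2
    have hcols : ∑ i, rowOuter H i p.2 q.2 = 0 := by
      rw [← Matrix.sum_apply, sum_rowOuter hH]
      simp [hne]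
    rw [hcols, rowOuter_eq_allOnes h₀] at hfold
    calc ∑ d, rowOuter H (f (p.1 - d)) p.2 q.2 = ∑ g, rowOuter H (f g) p.2 q.2 :=
          (Equiv.subLeft p.1).sum_comp fun g => rowOuter H (f g) p.2 q.2
      _ = -1 := by simpa [allOnes] using eq_neg_of_add_eq_zero_left hfold
  calc (twinSign H f ε * twinSign H f ε) p q
      = ∑ d, Fintype.card ι * rowOuter H (f (p.1 - d)) p.2 q.2 := by
        rw [twinSign_mul_self_apply, ← hpq]
        refine Finset.sum_congr rfl fun d _ => ?_
        rw [hsigns, hf.apply_sub_comm d, rowOuter_mul_self hH, one_mul, Matrix.smul_apply,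
          smul_eq_mul]
    _ = -Fintype.card ι := by rw [← Finset.mul_sum, hsum, mul_neg_one]

theorem twinSign_mul_self_apply_of_fst_ne (hH : H.IsHadamard) (hf : IsQuotientByNeg f)
    (hG : Odd (Fintype.card G)) (ε : ℤˣ) {p q : G × ι} (hpq : p.1 ≠ q.1) :
    (twinSign H f ε * twinSign H f ε) p q = Fintype.card ι ∨
      (twinSign H f ε * twinSign H f ε) p q = -Fintype.card ι := by
  obtain ⟨m, hm, hm_unique⟩ := hf.existsUnique_apply_sub_eq hG hpq
  have hvanish (d : G) (hd : d ≠ m) : rowOuter H (f (p.1 - d)) * rowOuter H (f (d - q.1)) = 0 :=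
    rowOuter_mul_of_ne hH (mt (hm_unique d) hd)
  have hsingle : (twinSign H f ε * twinSign H f ε) p q =
      Fintype.card ι * (((if p.1 = m then 1 else ε) * (if m = q.1 then 1 else ε) : ℤˣ) *
        rowOuter H (f (p.1 - m)) p.2 q.2) := by
    rw [twinSign_mul_self_apply, Fintype.sum_eq_single m fun d hd => by simp [hvanish d hd], ← hm,
      rowOuter_mul_self hH, Matrix.smul_apply, smul_eq_mul, mul_left_comm, ← Units.val_mul]
  rw [hsingle]
  rcases Int.isUnit_iff.mp
    ((Units.isUnit _).mul (isUnit_rowOuter_apply hH (f (p.1 - m)) p.2 q.2)) with h | h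
  · exact Or.inl (by rw [h, mul_one])
  · exact Or.inr (by rw [h, mul_neg_one])

theorem isDezaReflexiveAdj_positiveSupport_twinSign (hH : H.IsHadamard) (hf : IsQuotientByNeg f)
    (hcard : Fintype.card G + 1 = 2 * Fintype.card ι) (hι : Even (Fintype.card ι))
    (h₀ : ∀ x, H (f 0) x = 1) (ε : ℤˣ) :
    IsDezaReflexiveAdj (positiveSupport (twinSign H f ε)) ((Fintype.card ι : ℤ) ^ 2)
      ((Fintype.card ι : ℤ) * ((Fintype.card ι : ℤ) + 1) / 2) ((Fintype.card ι : ℤ) ^ 2 / 2) := by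
  have hG : Odd (Fintype.card G) := ⟨Fintype.card ι - 1, by omega⟩
  have hcard' : (Fintype.card (G × ι) : ℤ) = (2 * Fintype.card ι - 1) * Fintype.card ι := by
    have hcardG : (Fintype.card G : ℤ) = 2 * Fintype.card ι - 1 := by omega
    rw [Fintype.card_prod, Nat.cast_mul, hcardG]
  have hι' : Even (Fintype.card ι : ℤ) := (Int.even_coe_nat _).mpr hι
  have hb := Int.two_mul_ediv_two_of_even (hι'.mul_right (Fintype.card ι + 1))
  have ha := Int.two_mul_ediv_two_of_even (hι'.pow_of_ne_zero two_ne_zero)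
  refine isDezaReflexiveAdj_positiveSupport (r := Fintype.card ι) (μ := Fintype.card ι)
    (isUnit_twinSign_apply hH f ε) (isSymm_twinSign hf H ε)
    (fun _ => twinSign_apply_of_fst_eq h₀ ε rfl) (sum_twinSign_apply hH hf h₀ ε)
    (fun p q hpq => ?_) (by rw [hcard']; ring) (by rw [hcard']; linarith) (by rw [hcard']; linarith)
  by_cases hfst : p.1 = q.1
  · exact Or.inr (twinSign_mul_self_apply_of_fst_eq hH hf hG h₀ ε hfst
      fun hsnd => hpq (Prod.ext hfst hsnd))
  · exact twinSign_mul_self_apply_of_fst_ne hH hf hG ε hfst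

end Twin

section TwinPart

variable {G ι : Type*} [AddCommGroup G] [DecidableEq G] {H : Matrix ι ι ℤ} {f : G → ι}

/-- The matrix of the edges between distinct blocks in the twin with sign `ε`: the matrices `K` and
`L` of a Siamese twin are the cases `ε = 1` and `ε = -1`. -/
def twinPart (H : Matrix ι ι ℤ) (f : G → ι) (ε : ℤˣ) : Matrix (G × ι) (G × ι) ℤ :=
  positiveSupport (twinSign H f ε) - (1 : Matrix G G ℤ) ⊗ₖ allOnes ι

theorem twinPart_apply_of_fst_eq (h₀ : ∀ x, H (f 0) x = 1) (ε : ℤˣ) {p q : G × ι}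
    (hpq : p.1 = q.1) : twinPart H f ε p q = 0 := by
  simp [twinPart, positiveSupport, twinSign_apply_of_fst_eq h₀ ε hpq, one_apply, hpq, allOnes]

theorem twinPart_apply_of_fst_ne (H : Matrix ι ι ℤ) (f : G → ι) (ε : ℤˣ) {p q : G × ι}
    (hpq : p.1 ≠ q.1) : twinPart H f ε p q = positiveSupport (twinSign H f ε) p q := by
  simp [twinPart, hpq]

theorem isZeroOne_twinPart (h₀ : ∀ x, H (f 0) x = 1) (ε : ℤˣ) :
    IsZeroOne (twinPart H f ε) := by
  intro p q
  by_cases hpq : p.1 = q.1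
  · exact Or.inl (twinPart_apply_of_fst_eq h₀ ε hpq)
  · rw [twinPart_apply_of_fst_ne H f ε hpq]
    exact isZeroOne_positiveSupport _ p q

theorem twinPart_add_twinPart_neg [Fintype ι] [DecidableEq ι] (hH : H.IsHadamard)
    (h₀ : ∀ x, H (f 0) x = 1) (ε : ℤˣ) :
    twinPart H f ε + twinPart H f (-ε) = (allOnes G - 1) ⊗ₖ allOnes ι := by
  ext p q
  rw [Matrix.add_apply, kroneckerMap_apply]
  by_cases hpq : p.1 = q.1
  · simp [twinPart_apply_of_fst_eq h₀ _ hpq, hpq, allOnes]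
  · have hneg : twinSign H f (-ε) p q = -twinSign H f ε p q := by
      simp [twinSign_apply, hpq]
    have hpos := two_mul_positiveSupport_apply (isUnit_twinSign_apply hH f ε p q)
    have hpos_neg := two_mul_positiveSupport_apply (isUnit_twinSign_apply hH f (-ε) p q)
    rw [twinPart_apply_of_fst_ne H f _ hpq, twinPart_apply_of_fst_ne H f _ hpq]
    simp only [allOnes, Matrix.sub_apply, of_apply, one_apply_ne hpq, sub_zero, mul_one]
    linarith

end TwinPart

theorem siamese_twin_deza_reflexive_from_hadamard_general {α ι : Type*} [Fintype α] [DecidableEq α]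
    [Fintype ι] [DecidableEq ι] (n : ℕ) (hn : Even n) (hα : Fintype.card α = 2 * n - 1)
    (hι : Fintype.card ι = n) (H : Matrix ι ι ℤ) (hH : ∀ i j, H i j = 1 ∨ H i j = -1)
    (hHH : H * Hᵀ = (n : ℤ) • (1 : Matrix ι ι ℤ)) :
    ∃ K L : Matrix (α × ι) (α × ι) ℤ,
      IsZeroOne K ∧ IsZeroOne L ∧
      K + L = (allOnes α - 1) ⊗ₖ allOnes ι ∧
      IsDezaReflexiveAdj ((1 : Matrix α α ℤ) ⊗ₖ allOnes ι + K)
        ((n : ℤ) ^ 2) ((n : ℤ) * ((n : ℤ) + 1) / 2) ((n : ℤ) ^ 2 / 2) ∧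
      IsDezaReflexiveAdj ((1 : Matrix α α ℤ) ⊗ₖ allOnes ι + L)
        ((n : ℤ) ^ 2) ((n : ℤ) * ((n : ℤ) + 1) / 2) ((n : ℤ) ^ 2 / 2) := by
  subst hι
  obtain hempty | hnonempty := isEmpty_or_nonempty ι
  · have hdeza (M : Matrix (α × ι) (α × ι) ℤ) (k b a : ℤ) : IsDezaReflexiveAdj M k b a :=
      isDezaReflexiveAdj_of_mul_self_apply isEmptyElim (Subsingleton.elim _ _) isEmptyElim
        isEmptyElim isEmptyElim
    exact ⟨0, 0, isEmptyElim, isEmptyElim, Subsingleton.elim _ _, hdeza _ _ _ _, hdeza _ _ _ _⟩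
  have hpos : 0 < Fintype.card ι := Fintype.card_pos
  have hcard : Fintype.card α + 1 = 2 * Fintype.card ι := by omega
  have : Nonempty α := Fintype.card_pos_iff.mp (by omega)
  -- Any abelian group structure on the block indices serves; that of a ring is at hand.
  obtain ⟨_⟩ : Nonempty (CommRing α) := inferInstance
  obtain ⟨f, hf⟩ := exists_isQuotientByNeg hcard
  have hHad : H.IsHadamard := IsHadamard.of_mul_conjTranspose
    (fun i j => Unitary.mem_iff_eq_one_or_eq_neg_one.mpr (hH i j))
    (by rwa [conjTranspose_eq_transpose_of_trivial])
    (IsRegular.of_ne_zero (by exact_mod_cast hpos.ne'))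
  obtain ⟨H', hH', h₀⟩ := exists_isHadamard_row_eq_one hHad (f 0)
  have hdeza (ε : ℤˣ) := isDezaReflexiveAdj_positiveSupport_twinSign hH' hf hcard hn h₀ ε
  refine ⟨twinPart H' f 1, twinPart H' f (-1), isZeroOne_twinPart h₀ _, isZeroOne_twinPart h₀ _,
    twinPart_add_twinPart_neg hH' h₀ 1, ?_, ?_⟩
  · rw [twinPart, add_sub_cancel]
    exact hdeza 1
  · rw [twinPart, add_sub_cancel]
    exact hdeza (-1)

/-- a Hadamard matrix of even order n yields a Siamese twin Deza reflexive
graph with parameters ((2n−1)n, n², n(n+1)/2, n²/2) sharing the entries of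
N = I_{2n−1} ⊗ J_n. -/
theorem siamese_twin_deza_reflexive_from_hadamard (n : ℕ) (hn : Even n)
    (H : Matrix (Fin n) (Fin n) ℤ)
    (hH : ∀ i j, H i j = 1 ∨ H i j = -1)
    (hHH : H * Hᵀ = (n : ℤ) • (1 : Matrix (Fin n) (Fin n) ℤ)) :
    ∃ K L : Matrix (Fin (2 * n - 1) × Fin n) (Fin (2 * n - 1) × Fin n) ℤ,
      IsZeroOne K ∧ IsZeroOne L ∧
      K + L = (allOnes (Fin (2 * n - 1)) - 1) ⊗ₖ allOnes (Fin n) ∧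
      IsDezaReflexiveAdj
        ((1 : Matrix (Fin (2 * n - 1)) (Fin (2 * n - 1)) ℤ) ⊗ₖ allOnes (Fin n) + K)
        ((n : ℤ) ^ 2) ((n : ℤ) * ((n : ℤ) + 1) / 2) ((n : ℤ) ^ 2 / 2) ∧
      IsDezaReflexiveAdj
        ((1 : Matrix (Fin (2 * n - 1)) (Fin (2 * n - 1)) ℤ) ⊗ₖ allOnes (Fin n) + L)
        ((n : ℤ) ^ 2) ((n : ℤ) * ((n : ℤ) + 1) / 2) ((n : ℤ) ^ 2 / 2) :=
  siamese_twin_deza_reflexive_from_hadamard_general n hn (Fintype.card_fin _) (Fintype.card_fin n)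
    H hH hHH
end

section
/- Let M be the adjacency matrix of a directed (n,k,b,a)-Deza graph of type II with witnessing (0,1)-matrices X and Y (so M·J = J·M = k·J, M·Mᵀ = Mᵀ·M = a·X + b·Y + k·I and X + Y + I = J), and suppose a ≠ b. Then, viewing all matrices over the integers, (b−a)·(X·𝟙) = (b(n−1) − k² + k)·𝟙 and (a−b)·(Y·𝟙) = (a(n−1) − k² + k)·𝟙, where 𝟙 is the all-ones column vector; i.e., every row of X has the same sum α = (b(n−1)−k²+k)/(b−a) and every row of Y has the same sum β = (a(n−1)−k²+k)/(a−b), independent of the vertex. -/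
open Matrix Kronecker

/-! Apply the two matrix identities to the all-ones vector `𝟙`. Since `M` and `Mᵀ` scale `𝟙` by `k`,
they become `a • X𝟙 + b • Y𝟙 + k • 𝟙 = k² • 𝟙` and `X𝟙 + Y𝟙 + 𝟙 = n • 𝟙`, a linear system in `X𝟙`
and `Y𝟙` with determinant `a - b`. -/

section RowSums

variable {ι κ μ R : Type*}

theorem mul_ones_eq_smul_ones_iff [Fintype κ] [NonAssocSemiring R] {M : Matrix ι κ R} {k : R} :
    M * (of fun _ _ => 1 : Matrix κ ι R) = k • (of fun _ _ => 1) ↔ M *ᵥ 1 = k • 1 := by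
  simp only [← Matrix.ext_iff, funext_iff, mul_apply, mulVec, dotProduct, Matrix.smul_apply,
    of_apply, Pi.smul_apply, Pi.one_apply]
  exact ⟨fun h i => h i i, fun h i _ => h i⟩

theorem ones_mul_eq_smul_ones_iff [Fintype κ] [CommSemiring R] {M : Matrix κ ι R} {k : R} :
    (of fun _ _ => 1 : Matrix ι κ R) * M = k • (of fun _ _ => 1) ↔ Mᵀ *ᵥ 1 = k • 1 := by
  rw [← mul_ones_eq_smul_ones_iff, ← transpose_inj, transpose_mul, transpose_smul]
  rfl

theorem ones_mulVec_one [Fintype ι] [NonAssocSemiring R] :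
    (of fun _ _ => 1 : Matrix κ ι R) *ᵥ 1 = (Fintype.card ι : R) • 1 := by
  ext
  simp [mulVec, dotProduct]

theorem mul_mulVec_one_eq_smul [Fintype ι] [Fintype κ] [CommSemiring R]
    {M : Matrix μ κ R} {N : Matrix κ ι R} {r s : R} (hM : M *ᵥ 1 = r • 1) (hN : N *ᵥ 1 = s • 1) :
    (M * N) *ᵥ 1 = (r * s) • 1 := by
  rw [← mulVec_mulVec, hN, mulVec_smul, hM, smul_smul, mul_comm]

variable [Fintype ι] [DecidableEq ι] [CommRing R]

theorem sub_smul_mulVec_one_of_add_eq_ones {X Y : Matrix ι ι R} {a b c s : R}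
    (hXY : X + Y + 1 = of fun _ _ => 1)
    (hsum : (a • X + b • Y + c • (1 : Matrix ι ι R)) *ᵥ 1 = s • 1) :
    (b - a) • (X *ᵥ 1) = (b * (Fintype.card ι - 1) - s + c) • 1 := by
  have hweighted : a • (X *ᵥ 1) + b • (Y *ᵥ 1) + c • 1 = s • (1 : ι → R) := by
    simpa only [add_mulVec, smul_mulVec, one_mulVec] using hsum
  have hcount : X *ᵥ 1 + Y *ᵥ 1 + 1 = (Fintype.card ι : R) • (1 : ι → R) := by
    rw [← ones_mulVec_one, ← hXY, add_mulVec, add_mulVec, one_mulVec]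
  linear_combination (norm := module) b • hcount - hweighted

theorem deza_digraph_typeII_row_sums_general {a b k : R} {M X Y : Matrix ι ι R}
    (hMJ : M * (of fun _ _ => 1 : Matrix ι ι R) = k • (of fun _ _ => 1))
    (hJM : (of fun _ _ => 1 : Matrix ι ι R) * M = k • (of fun _ _ => 1))
    (hMMt : M * Mᵀ = a • X + b • Y + k • (1 : Matrix ι ι R))
    (hXYI : X + Y + 1 = of fun _ _ => 1) :
    (b - a) • (X *ᵥ 1) = (b * (Fintype.card ι - 1) - k ^ 2 + k) • 1 ∧
    (a - b) • (Y *ᵥ 1) = (a * (Fintype.card ι - 1) - k ^ 2 + k) • 1 := by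
  have hsum : (a • X + b • Y + k • (1 : Matrix ι ι R)) *ᵥ 1 = k ^ 2 • 1 := by
    rw [← hMMt, sq]
    exact mul_mulVec_one_eq_smul (mul_ones_eq_smul_ones_iff.1 hMJ)
      (ones_mul_eq_smul_ones_iff.1 hJM)
  refine ⟨sub_smul_mulVec_one_of_add_eq_ones hXYI hsum,
    sub_smul_mulVec_one_of_add_eq_ones (X := Y) (Y := X) ?_ ?_⟩
  · rwa [add_comm Y X]
  · rwa [add_comm (a • X) (b • Y)] at hsum

end RowSums

/-- for a directed (n,k,b,a)-Deza graph of type II with witnessing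
matrices X, Y and a ≠ b, every row of X sums to α = (b(n−1)−k²+k)/(b−a) and every row
of Y sums to β = (a(n−1)−k²+k)/(a−b). -/
theorem deza_digraph_typeII_row_sums (n : ℕ) (a b k : ℤ)
    (h0a : 0 ≤ a) (hab : a ≤ b) (hbk : b ≤ k) (hkn : k ≤ (n : ℤ))
    (M X Y : Matrix (Fin n) (Fin n) ℤ)
    (hM01 : IsZeroOne M) (hX01 : IsZeroOne X) (hY01 : IsZeroOne Y)
    (hMJ : M * allOnes (Fin n) = k • allOnes (Fin n))
    (hJM : allOnes (Fin n) * M = k • allOnes (Fin n))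
    (hMMt : M * Mᵀ = a • X + b • Y + k • (1 : Matrix (Fin n) (Fin n) ℤ))
    (hMtM : Mᵀ * M = a • X + b • Y + k • (1 : Matrix (Fin n) (Fin n) ℤ))
    (hXYI : X + Y + 1 = allOnes (Fin n))
    (hne : a ≠ b) :
    ((b - a) • (X *ᵥ fun _ => (1 : ℤ)) = (fun _ => b * ((n : ℤ) - 1) - k ^ 2 + k)) ∧
    ((a - b) • (Y *ᵥ fun _ => (1 : ℤ)) = (fun _ => a * ((n : ℤ) - 1) - k ^ 2 + k)) := by
  simpa only [Fintype.card_fin, Pi.smul_def, Pi.one_def, smul_eq_mul, mul_one] using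
    deza_digraph_typeII_row_sums_general hMJ hJM hMMt hXYI
end

section
/- Let q be a power of an odd prime and let φ, C_{γ,α} (γ,α ∈ 𝔽_q) and C_{y,α} be as in the context. Then for every α ∈ 𝔽_q, Σ_{γ∈𝔽_q} C_{γ,α} + C_{y,α} = q·(I_q ⊗ φ(α)) + (J_q + φ(α) − I_q) ⊗ J_q, where I_q ⊗ φ(α) is the block-diagonal matrix with every diagonal block equal to φ(α). -/
open Matrix Kronecker

/-- The regular permutation representation of the additive group of `F`:
`phiMat F x` has (u,v)-entry 1 iff u = v + x. -/
def phiMat (F : Type*) [AddGroup F] [DecidableEq F] (x : F) : Matrix F F ℤ :=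
  Matrix.of fun u v => if u = v + x then 1 else 0

/-- The auxiliary matrix C_{α,α'}: the q²×q² block matrix whose (β,β')-block is
φ(α(β'−β) + α'). -/
def Cmat (F : Type*) [Field F] [DecidableEq F] (α α' : F) :
    Matrix (F × F) (F × F) ℤ :=
  Matrix.of fun p p' => phiMat F (α * (p'.1 - p.1) + α') p.2 p'.2

/-- The auxiliary matrix C_{y,α} = φ(α) ⊗ J_q. -/
def CyMat (F : Type*) [Field F] [Fintype F] [DecidableEq F] (α : F) :
    Matrix (F × F) (F × F) ℤ :=
  phiMat F α ⊗ₖ allOnes F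

/-!
In block `(β, β')` of `∑ γ, C_{γ,α}` the argument `γ(β' - β) + α` of `φ` is constantly `α` on the
diagonal and runs through the whole field once off the diagonal. Hence diagonal blocks sum to
`q φ(α)` and off-diagonal ones to `∑ x, φ(x) = J`.
-/

theorem sum_phiMat (G : Type*) [AddGroup G] [Fintype G] [DecidableEq G] :
    ∑ x : G, phiMat G x = allOnes G := by
  ext u v
  simp [Matrix.sum_apply, phiMat, allOnes, ← neg_add_eq_iff_eq_add]

theorem sum_phiMat_mul_add_of_isUnit {R : Type*} [Ring R] [Fintype R] [DecidableEq R]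
    {d : R} (hd : IsUnit d) (a : R) :
    ∑ x : R, phiMat R (x * d + a) = allOnes R :=
  calc
    ∑ x : R, phiMat R (x * d + a) = ∑ y : R, phiMat R y :=
      (hd.unit.mulRight.trans (Equiv.addRight a)).sum_comp (phiMat R)
    _ = allOnes R := sum_phiMat R

section Field

variable {F : Type*} [Field F] [Fintype F] [DecidableEq F]

theorem sum_Cmat_apply (α : F) (p p' : F × F) :
    (∑ γ : F, Cmat F γ α) p p' =
      (∑ γ : F, phiMat F (γ * (p'.1 - p.1) + α)) p.2 p'.2 := by
  simp only [Matrix.sum_apply, Cmat, of_apply]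

theorem sum_Cmat (α : F) :
    ∑ γ : F, Cmat F γ α =
      (Fintype.card F : ℤ) • ((1 : Matrix F F ℤ) ⊗ₖ phiMat F α) +
        (allOnes F - 1) ⊗ₖ allOnes F := by
  ext ⟨β, u⟩ ⟨β', v⟩
  rw [sum_Cmat_apply, Matrix.add_apply, Matrix.smul_apply]
  obtain rfl | hβ := eq_or_ne β β'
  · simp [allOnes]
  · rw [sum_phiMat_mul_add_of_isUnit (sub_ne_zero.mpr hβ.symm).isUnit]
    simp [allOnes, hβ]

end Field

theorem sum_of_auxiliary_matrices_general (F : Type*) [Field F] [Fintype F] [DecidableEq F]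
    (α : F) :
    (∑ γ : F, Cmat F γ α) + CyMat F α =
      (Fintype.card F : ℤ) • ((1 : Matrix F F ℤ) ⊗ₖ phiMat F α) +
      (allOnes F + phiMat F α - 1) ⊗ₖ allOnes F := by
  rw [sum_Cmat, CyMat, add_assoc, ← add_kronecker, sub_add_eq_add_sub]

/-- Σ_{γ∈𝔽_q} C_{γ,α} + C_{y,α} = q·(I_q ⊗ φ(α)) + (J_q + φ(α) − I_q) ⊗ J_q. -/
theorem sum_of_auxiliary_matrices (F : Type*) [Field F] [Fintype F] [DecidableEq F]
    (hodd : Odd (Fintype.card F)) (α : F) :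
    (∑ γ : F, Cmat F γ α) + CyMat F α =
      (Fintype.card F : ℤ) • ((1 : Matrix F F ℤ) ⊗ₖ phiMat F α) +
      (allOnes F + phiMat F α - 1) ⊗ₖ allOnes F :=
  sum_of_auxiliary_matrices_general F α
end

section
/- Let q ≥ 1 and set m = 2q+3. Let V be the m×m cyclic shift permutation matrix (V has (i,j)-entry 1 iff j ≡ i+1 mod m), and for i = 1, …, q+1 set P_i = V^i + V^{−i}. Then Σ_{1 ≤ i, j ≤ q+1, i ≠ j} P_i·P_j = 2q·(J_m − I_m). -/
open Matrix

/-- The m×m cyclic shift permutation matrix: (i,j)-entry 1 iff j ≡ i+1 (mod m). -/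
def shiftV (m : ℕ) : Matrix (Fin m) (Fin m) ℤ :=
  Matrix.of fun i j => if (j : ℕ) = ((i : ℕ) + 1) % m then 1 else 0

/-!
Let `N = 1 + v + ⋯ + v ^ (2 * n)` where `v ^ (2 * n + 1) = 1`, and let `P i = v ^ i + v ^ (-i)`.
The exponents `±1, …, ±n` are exactly the nonzero residues modulo `2 * n + 1`, so
`∑ P i = N - 1`. As `2` is invertible modulo `2 * n + 1`, the same holds for `v ^ 2`, and
`∑ P i ^ 2 = N - 1 + 2 * n`. Since `N ^ 2 = (2 * n + 1) * N`, subtracting the diagonal from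
`(∑ P i) ^ 2` leaves `(2 * n - 2) * (N - 1)`. For the cyclic shift `N` is the all-ones matrix.
-/

open Finset

theorem offDiag_eq_filter {ι : Type*} [DecidableEq ι] (s : Finset ι) :
    s.offDiag = (s ×ˢ s).filter fun p ↦ p.1 ≠ p.2 := by
  grind

theorem sum_offDiag_mul {ι R : Type*} [NonUnitalNonAssocRing R] (s : Finset ι) (f g : ι → R) :
    ∑ p ∈ s.offDiag, f p.1 * g p.2 = (∑ i ∈ s, f i) * ∑ i ∈ s, g i - ∑ i ∈ s, f i * g i := by
  classical
  rw [eq_sub_iff_add_eq', sum_mul_sum, ← sum_product', ← diag_union_offDiag,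
    sum_union (disjoint_diag_offDiag s), sum_diag]

theorem sum_range_comp_mul_of_coprime {M : Type*} [AddCommMonoid M] {f : ℕ → M} {m a : ℕ}
    (hf : Function.Periodic f m) (ha : m.Coprime a) :
    ∑ k ∈ range m, f (a * k) = ∑ k ∈ range m, f k := by
  have maps : Set.MapsTo (fun k ↦ a * k % m) (range m) (range m) := fun k hk ↦
    mem_coe.2 <| mem_range.2 <| Nat.mod_lt _ <| Nat.zero_lt_of_lt <| mem_range.1 hk
  have inj : Set.InjOn (fun k ↦ a * k % m) (range m) := fun k hk l hl h ↦
    (Nat.ModEq.cancel_left_of_coprime ha h).eq_of_lt_of_lt (mem_range.1 hk) (mem_range.1 hl)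
  exact sum_nbij (fun k ↦ a * k % m) maps inj (surjOn_of_injOn_of_card_le _ maps inj le_rfl)
    fun k _ ↦ (hf.map_mod_nat (a * k)).symm

section Monoid

variable {M : Type*} [Monoid M] {v w : M} {m k : ℕ}

theorem periodic_pow_of_pow_eq_one (hv : v ^ m = 1) : Function.Periodic (fun k ↦ v ^ k) m :=
  fun k ↦ by simp only [pow_add, hv, mul_one]

theorem pow_eq_pow_sub_of_mul_eq_one (hvw : v * w = 1) (hv : v ^ m = 1) (hk : k ≤ m) :
    w ^ k = v ^ (m - k) :=
  (left_inv_eq_right_inv (by rw [← pow_add, Nat.sub_add_cancel hk, hv])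
    (pow_mul_pow_eq_one k hvw)).symm

end Monoid

section Semiring

variable {R : Type*} [Semiring R] {v w : R} {n : ℕ}

theorem sum_Icc_pow_add_pow_add_one (hvw : v * w = 1) (hv : v ^ (2 * n + 1) = 1) :
    ∑ i ∈ Icc 1 n, (v ^ i + w ^ i) + 1 = ∑ k ∈ range (2 * n + 1), v ^ k := by
  have reflect : ∑ i ∈ Ico 1 (n + 1), w ^ i = ∑ k ∈ Ico (n + 1) (2 * n + 1), v ^ k := by
    calc ∑ i ∈ Ico 1 (n + 1), w ^ i
        = ∑ i ∈ Ico 1 (n + 1), v ^ (2 * n + 1 - i) := sum_congr rfl fun i hi ↦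
          pow_eq_pow_sub_of_mul_eq_one hvw hv (by have := mem_Ico.1 hi; omega)
      _ = ∑ k ∈ Ico (n + 1) (2 * n + 1), v ^ k := by
          rw [sum_Ico_reflect _ _ (by omega)]
          congr 2
          omega
  rw [← Ico_add_one_right_eq_Icc, sum_add_distrib, reflect,
    sum_Ico_consecutive _ (by omega) (by omega), sum_range_eq_add_Ico _ (by omega), pow_zero,
    add_comm]

theorem pow_add_pow_mul_self_of_mul_eq_one (hvw : v * w = 1) (hwv : w * v = 1) (i : ℕ) :
    (v ^ i + w ^ i) * (v ^ i + w ^ i) = (v ^ 2) ^ i + (w ^ 2) ^ i + 2 := by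
  calc (v ^ i + w ^ i) * (v ^ i + w ^ i)
      = v ^ i * v ^ i + w ^ i * w ^ i + (v ^ i * w ^ i + w ^ i * v ^ i) := by
        rw [mul_add, add_mul, add_mul]
        abel
    _ = (v ^ 2) ^ i + (w ^ 2) ^ i + 2 := by
        rw [pow_mul_pow_eq_one i hvw, pow_mul_pow_eq_one i hwv, one_add_one_eq_two,
          ← pow_two, ← pow_two, pow_right_comm v, pow_right_comm w]

end Semiring

section Ring

variable {R : Type*} [Ring R] {v w : R} {n m : ℕ}

theorem pow_mul_geom_sum_of_pow_eq_one (hv : v ^ m = 1) (k : ℕ) :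
    v ^ k * ∑ l ∈ range m, v ^ l = ∑ l ∈ range m, v ^ l := by
  have fixed : v * ∑ l ∈ range m, v ^ l = ∑ l ∈ range m, v ^ l := by
    rw [← sub_eq_zero, ← sub_one_mul, mul_geom_sum, hv, sub_self]
  induction k with
  | zero => rw [pow_zero, one_mul]
  | succ k ih => rw [pow_succ, mul_assoc, fixed, ih]

theorem geom_sum_mul_self_of_pow_eq_one (hv : v ^ m = 1) :
    (∑ k ∈ range m, v ^ k) * ∑ k ∈ range m, v ^ k = m • ∑ k ∈ range m, v ^ k := by
  rw [sum_mul, sum_congr rfl fun k _ ↦ pow_mul_geom_sum_of_pow_eq_one hv k, sum_const, card_range]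

theorem sum_Icc_pow_add_pow_mul_self (hvw : v * w = 1) (hv : v ^ (2 * n + 1) = 1) :
    ∑ i ∈ Icc 1 n, (v ^ i + w ^ i) * (v ^ i + w ^ i) =
      ∑ k ∈ range (2 * n + 1), v ^ k - 1 + (2 * n : ℤ) • 1 := by
  have hwv : w * v = 1 := by
    have hw : w = v ^ (2 * n) := by
      simpa using pow_eq_pow_sub_of_mul_eq_one (k := 1) hvw hv (by omega)
    rw [hw, ← pow_succ, hv]
  have hvw_sq : v ^ 2 * w ^ 2 = 1 := pow_mul_pow_eq_one 2 hvw
  have hv_sq : (v ^ 2) ^ (2 * n + 1) = 1 := by rw [pow_right_comm, hv, one_pow]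
  have geom_sum_sq : ∑ k ∈ range (2 * n + 1), (v ^ 2) ^ k = ∑ k ∈ range (2 * n + 1), v ^ k := by
    simp only [← pow_mul]
    exact sum_range_comp_mul_of_coprime (periodic_pow_of_pow_eq_one hv) (by simp)
  simp only [pow_add_pow_mul_self_of_mul_eq_one hvw hwv]
  rw [sum_add_distrib, eq_sub_of_add_eq (sum_Icc_pow_add_pow_add_one hvw_sq hv_sq), geom_sum_sq]
  simp [mul_comm]

theorem sum_shift_products_general (hvw : v * w = 1) (hv : v ^ (2 * n + 1) = 1) :
    ∑ p ∈ (Icc 1 n).offDiag, (v ^ p.1 + w ^ p.1) * (v ^ p.2 + w ^ p.2) =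
      (2 * (n - 1) : ℤ) • (∑ k ∈ range (2 * n + 1), v ^ k - 1) := by
  have hN := geom_sum_mul_self_of_pow_eq_one hv
  rw [sum_offDiag_mul _ (fun i ↦ v ^ i + w ^ i) (fun i ↦ v ^ i + w ^ i),
    sum_Icc_pow_add_pow_mul_self hvw hv, eq_sub_of_add_eq (sum_Icc_pow_add_pow_add_one hvw hv)]
  set N := ∑ k ∈ range (2 * n + 1), v ^ k
  rw [sub_one_mul, mul_sub_one, hN]
  module

end Ring

theorem permMatrix_pow {ι R : Type*} [Fintype ι] [DecidableEq ι] [Semiring R]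
    (σ : Equiv.Perm ι) (k : ℕ) : (σ ^ k).permMatrix R = σ.permMatrix R ^ k := by
  induction k with
  | zero => rw [pow_zero, pow_zero, permMatrix_one]
  | succ k ih => rw [pow_succ', permMatrix_mul, ih, pow_succ]

section shiftV

variable (m : ℕ) [NeZero m]

theorem shiftV_eq_permMatrix : shiftV m = (Equiv.addRight (1 : Fin m)).permMatrix ℤ := by
  ext i j
  simp [shiftV, PEquiv.toMatrix_apply, Equiv.toPEquiv_apply, Fin.ext_iff, Fin.val_add, eq_comm]

theorem shiftV_pow_eq_permMatrix (k : ℕ) :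
    shiftV m ^ k = (Equiv.addRight (k • (1 : Fin m))).permMatrix ℤ := by
  rw [shiftV_eq_permMatrix, ← permMatrix_pow, Equiv.nsmul_addRight]

theorem shiftV_pow_apply (k : ℕ) (i j : Fin m) :
    (shiftV m ^ k) i j = if i + k • 1 = j then 1 else 0 := by
  simp [shiftV_pow_eq_permMatrix, PEquiv.toMatrix_apply, Equiv.toPEquiv_apply]

theorem shiftV_pow_eq_one : shiftV m ^ m = 1 := by
  have card_nsmul_one : m • (1 : Fin m) = 0 := by simpa using card_nsmul_eq_zero (x := (1 : Fin m))
  rw [shiftV_pow_eq_permMatrix, card_nsmul_one, Equiv.addRight_zero, permMatrix_one]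

theorem shiftV_mul_transpose : shiftV m * (shiftV m)ᵀ = 1 := by
  rw [shiftV_eq_permMatrix, transpose_permMatrix, ← permMatrix_mul, inv_mul_cancel, permMatrix_one]

theorem sum_range_shiftV_pow : ∑ k ∈ range m, shiftV m ^ k = allOnes (Fin m) := by
  ext i j
  have val_nsmul_one (k : Fin m) : (k : ℕ) • (1 : Fin m) = k := by
    open scoped Fin.CommRing in rw [nsmul_one, Fin.cast_val_eq_self]
  calc (∑ k ∈ range m, shiftV m ^ k) i j
      = ∑ k : Fin m, if i + k = j then 1 else 0 := by
        simp only [Matrix.sum_apply, sum_range, shiftV_pow_apply, val_nsmul_one]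
    _ = 1 := by simp [← eq_sub_iff_add_eq']

end shiftV

/-- for m = 2q+3 and P_i = V^i + V^{−i} (1 ≤ i ≤ q+1),
Σ_{i ≠ j} P_i·P_j = 2q·(J_m − I_m). -/
theorem sum_shift_products (q : ℕ) (hq : 1 ≤ q) :
    ∑ p ∈ ((Finset.Icc 1 (q + 1)) ×ˢ (Finset.Icc 1 (q + 1))).filter
        (fun p => p.1 ≠ p.2),
      ((shiftV (2 * q + 3) ^ p.1 + (shiftV (2 * q + 3))ᵀ ^ p.1) *
       (shiftV (2 * q + 3) ^ p.2 + (shiftV (2 * q + 3))ᵀ ^ p.2)) =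
    (2 * q : ℤ) • (allOnes (Fin (2 * q + 3)) - 1) := by
  rw [← offDiag_eq_filter, ← sum_range_shiftV_pow]
  convert! sum_shift_products_general (n := q + 1) (shiftV_mul_transpose (2 * q + 3))
    (shiftV_pow_eq_one (2 * q + 3)) using 2
  simp
end
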